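/- arXiv:cs/9811019 — 5 statements merged into one kernel-verified Lean document; each statement's English description precedes it below -/
import Mathlib

section
/- If a simple open polygonal chain in ℝ³ has a simple orthogonal projection onto some plane, then the chain can be straightened, i.e., there is a motion (a continuous, simplicity-preserving, edge-length-preserving deformation) taking it to a straight configuration. -/
noncomputable section

/-- Three-dimensional Euclidean space. -/
abbrev E3 := EuclideanSpace ℝ (Fin 3)

/-- `v 0, …, v n` is a simple open polygonal chain in ℝ³: `n ≥ 1`, the vertices are
pairwise distinct, and two edges `[v i, v (i+1)]`, `[v j, v (j+1)]` (for `i < j < n`)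
are disjoint unless they are consecutive (`j = i + 1`), in which case they meet
exactly in the common vertex `v j`. -/
def IsSimpleOpenChain (n : ℕ) (v : ℕ → E3) : Prop :=
  1 ≤ n ∧
  (∀ i j, i ≤ n → j ≤ n → i ≠ j → v i ≠ v j) ∧
  (∀ i j, i < j → j < n →
    segment ℝ (v i) (v (i + 1)) ∩ segment ℝ (v j) (v (j + 1)) =
      if i + 1 = j then {v j} else ∅)

/-- A motion of the open chain `v 0, …, v n`: a continuous family of configurations
over the time interval `[0,1]`, starting at `v`, remaining a simple open chain at
all times, and preserving all edge lengths. -/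
def IsChainMotion (n : ℕ) (v : ℕ → E3) (γ : ℝ → ℕ → E3) : Prop :=
  (∀ i, i ≤ n → ContinuousOn (fun t => γ t i) (Set.Icc 0 1)) ∧
  (∀ i, i ≤ n → γ 0 i = v i) ∧
  (∀ t ∈ Set.Icc (0 : ℝ) 1, IsSimpleOpenChain n (γ t)) ∧
  (∀ t ∈ Set.Icc (0 : ℝ) 1, ∀ i, i < n → ‖γ t (i + 1) - γ t i‖ = ‖v (i + 1) - v i‖)

/-- The configuration `w` is a straightening of the chain `v 0, …, v n`: all vertices
lie on a line, in order, with consecutive distances the original edge lengths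
`ℓ j = ‖v (j+1) - v j‖`. -/
def IsStraightening (n : ℕ) (v : ℕ → E3) (w : ℕ → E3) : Prop :=
  ∃ (p u : E3), ‖u‖ = 1 ∧
    ∀ i, i ≤ n → w i = p + (∑ j ∈ Finset.range i, ‖v (j + 1) - v j‖) • u

/-- The open chain `v 0, …, v n` can be straightened: there is a motion whose final
configuration is straight. -/
def CanBeStraightened (n : ℕ) (v : ℕ → E3) : Prop :=
  ∃ γ : ℝ → ℕ → E3, IsChainMotion n v γ ∧ IsStraightening n v (γ 1)

/-- The chain `v 0, …, v n` has a simple orthogonal projection: there is a plane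
(2-dimensional affine subspace `S` of ℝ³) such that the orthogonal projections
`w i` of the vertices onto `S` (characterized by `w i ∈ S` and `v i - w i ⟂ S`)
form a simple open polygonal chain. -/
def HasSimpleOrthogonalProjection (n : ℕ) (v : ℕ → E3) : Prop :=
  ∃ (S : AffineSubspace ℝ E3) (w : ℕ → E3),
    Module.finrank ℝ S.direction = 2 ∧
    (∀ i, i ≤ n → w i ∈ S ∧ v i - w i ∈ S.directionᗮ) ∧
    IsSimpleOpenChain n w

open Set

section PlanarChains

variable {V W : Type*} [AddCommGroup V] [Module ℝ V] [AddCommGroup W] [Module ℝ W]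

/-- The chain `v 0, …, v n` has nondegenerate edges, and two of its edges meet at most in
a common vertex of consecutive edges. -/
def IsSimpleChain (n : ℕ) (v : ℕ → V) : Prop :=
  (∀ i < n, v i ≠ v (i + 1)) ∧
  ∀ i j, i < j → j < n → ∀ x ∈ segment ℝ (v i) (v (i + 1)),
    x ∈ segment ℝ (v j) (v (j + 1)) → i + 1 = j ∧ x = v j

theorem isSimpleOpenChain_iff {n : ℕ} {v : ℕ → E3} :
    IsSimpleOpenChain n v ↔ 1 ≤ n ∧ IsSimpleChain n v := by
  constructor
  · rintro ⟨hn, hne, hseg⟩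
    refine ⟨hn, fun i hi => hne _ _ (by omega) (by omega) (by omega), ?_⟩
    intro i j hij hj x hx hx'
    have hmem : x ∈ segment ℝ (v i) (v (i + 1)) ∩ segment ℝ (v j) (v (j + 1)) := ⟨hx, hx'⟩
    rw [hseg i j hij hj] at hmem
    split_ifs at hmem with h
    · exact ⟨h, hmem⟩
    · exact hmem.elim
  · rintro ⟨hn, hne, hseg⟩
    have hlt : ∀ i j, i < j → j ≤ n → v i ≠ v j := by
      intro i j hij hj heq
      obtain ⟨k, rfl⟩ : ∃ k, j = k + 1 := ⟨j - 1, by omega⟩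
      rcases (Nat.lt_succ_iff.mp hij).eq_or_lt with rfl | hik
      · exact hne i (by omega) heq
      · have h := hseg i k hik (by omega) (v i) (left_mem_segment _ _ _)
          (heq ▸ right_mem_segment _ _ _)
        obtain ⟨rfl, h⟩ := h
        exact hne i (by omega) h
    refine ⟨hn, fun i j hi hj hij => ?_, fun i j hij hj => ?_⟩
    · rcases lt_or_gt_of_ne hij with h | h
      · exact hlt i j h hj
      · exact (hlt j i h hi).symm
    · ext x
      split_ifs with h
      · constructor
        · rintro ⟨hx, hx'⟩
          exact (hseg i j hij hj x hx hx').2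
        · rintro rfl
          subst h
          exact ⟨right_mem_segment _ _ _, left_mem_segment _ _ _⟩
      · simp only [mem_inter_iff, mem_empty_iff_false, iff_false, not_and]
        exact fun hx hx' => h (hseg i j hij hj x hx hx').1

theorem IsSimpleChain.mono {m n : ℕ} {v : ℕ → V} (h : IsSimpleChain n v) (hmn : m ≤ n) :
    IsSimpleChain m v :=
  ⟨fun i hi => h.1 i (by omega), fun i j hij hj => h.2 i j hij (by omega)⟩

/-- A chain is simple if some affine image of it is simple. -/
theorem IsSimpleChain.of_map {n : ℕ} {v : ℕ → V} (f : V →ᵃ[ℝ] W)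
    (h : IsSimpleChain n (fun i => f (v i))) : IsSimpleChain n v := by
  refine ⟨fun i hi heq => h.1 i hi (congrArg f heq), fun i j hij hj x hx hx' => ?_⟩
  have key : ∀ k, x ∈ segment ℝ (v k) (v (k + 1)) →
      f x ∈ segment ℝ (f (v k)) (f (v (k + 1))) := fun k hk => by
    rw [← image_segment]
    exact mem_image_of_mem f hk
  obtain ⟨hij', hfx⟩ := h.2 i j hij hj (f x) (key i hx) (key j hx')
  refine ⟨hij', ?_⟩
  rw [segment_eq_image_lineMap] at hx'
  obtain ⟨s, -, rfl⟩ := hx'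
  rw [AffineMap.apply_lineMap] at hfx
  rcases AffineMap.lineMap_eq_left_iff.mp hfx with h' | rfl
  · exact absurd h' (h.1 j hj)
  · simp

/-- Simple planar chains with `n` edges whose `i`-th edge has length at most `l i`. -/
def boundedChains (n : ℕ) (l : ℕ → ℝ) : Set (ℕ → ℂ) :=
  {p | IsSimpleChain n p ∧ ∀ i < n, ‖p (i + 1) - p i‖ ≤ l i}

/-- Replace vertex `m + 2` of a chain so that the edge arriving at it is `c` times the
preceding edge. -/
def extendChain (m : ℕ) (r : ℕ → ℂ) (c : ℂ) : ℕ → ℂ :=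
  Function.update r (m + 2) (r (m + 1) + c * (r (m + 1) - r m))

theorem extendChain_of_le {m i : ℕ} (r : ℕ → ℂ) (c : ℂ) (hi : i ≤ m + 1) :
    extendChain m r c i = r i :=
  Function.update_of_ne (by omega) _ _

theorem extendChain_last (m : ℕ) (r : ℕ → ℂ) (c : ℂ) :
    extendChain m r c (m + 2) = r (m + 1) + c * (r (m + 1) - r m) :=
  Function.update_self _ _ _

theorem continuous_extendChain (m : ℕ) :
    Continuous fun x : (ℕ → ℂ) × ℂ => extendChain m x.1 x.2 := by
  unfold extendChain
  fun_prop

theorem mem_segment_add_iff {a d x : V} :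
    x ∈ segment ℝ a (a + d) ↔ ∃ s ∈ Icc (0 : ℝ) 1, x = a + s • d := by
  rw [segment_eq_image']
  simp [eq_comm]

theorem extendChain_mem {m : ℕ} {l : ℕ → ℝ} {r : ℕ → ℂ} {c : ℂ}
    (hr : r ∈ boundedChains (m + 1) l) (hc : c ∈ Complex.slitPlane)
    (hlen : ‖c‖ * ‖r (m + 1) - r m‖ ≤ l (m + 1))
    (hdisj : ∀ i < m, ∀ x ∈ segment ℝ (r i) (r (i + 1)),
      x ∉ segment ℝ (r (m + 1)) (r (m + 1) + c * (r (m + 1) - r m))) :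
    extendChain m r c ∈ boundedChains (m + 2) l := by
  have hb : r (m + 1) - r m ≠ 0 := sub_ne_zero.mpr (hr.1.1 m (by omega)).symm
  have hc0 : c ≠ 0 := Complex.slitPlane_ne_zero hc
  refine ⟨⟨fun i hi => ?_, fun i j hij hj x hx hx' => ?_⟩, fun i hi => ?_⟩
  · rcases (show i ≤ m + 1 by omega).eq_or_lt with rfl | hi'
    · rw [extendChain_last, extendChain_of_le _ _ le_rfl]
      simpa using ⟨hc0, hb⟩
    · rw [extendChain_of_le _ _ hi'.le, extendChain_of_le _ _ hi']
      exact hr.1.1 i hi'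
  · rw [extendChain_of_le _ _ (by omega), extendChain_of_le _ _ (by omega)] at hx
    rcases (show j ≤ m + 1 by omega).eq_or_lt with rfl | hj'
    · rw [extendChain_last, extendChain_of_le _ _ le_rfl] at hx'
      rw [extendChain_of_le _ _ le_rfl]
      rcases (show i ≤ m by omega).eq_or_lt with rfl | hi'
      · refine ⟨rfl, ?_⟩
        obtain ⟨s, hs, rfl⟩ := mem_segment_add_iff.mp hx'
        rw [segment_symm, show r i = r (i + 1) + -(r (i + 1) - r i) by ring] at hx
        obtain ⟨t, ht, heq⟩ := mem_segment_add_iff.mp hx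
        have hst : (s : ℂ) * c = -t := by
          apply mul_right_cancel₀ hb
          have := add_left_cancel heq
          simp only [Complex.real_smul] at this
          linear_combination this
        have hre := congrArg Complex.re hst
        have him := congrArg Complex.im hst
        simp at hre him
        rcases hs.1.eq_or_lt with rfl | hs0
        · simp
        · rcases him with h | h
          · exact absurd h hs0.ne'
          · rcases hc with h' | h'
            · have := mul_pos hs0 h'
              linarith [ht.1]
            · exact absurd h h'
      · exact absurd hx' (hdisj i hi' x hx)
    · rw [extendChain_of_le _ _ hj'.le, extendChain_of_le _ _ hj'] at hx'
      rw [extendChain_of_le _ _ hj'.le]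
      exact hr.1.2 i j hij hj' x hx hx'
  · rcases (show i ≤ m + 1 by omega).eq_or_lt with rfl | hi'
    · rw [extendChain_last, extendChain_of_le _ _ le_rfl, add_sub_cancel_left, norm_mul]
      exact hlen
    · rw [extendChain_of_le _ _ hi'.le, extendChain_of_le _ _ hi']
      exact hr.2 i hi'

/-- The ratio of consecutive edges of a simple planar chain is not a nonpositive real. -/
theorem IsSimpleChain.div_mem_slitPlane {m : ℕ} {p : ℕ → ℂ} (hp : IsSimpleChain (m + 2) p) :
    (p (m + 2) - p (m + 1)) / (p (m + 1) - p m) ∈ Complex.slitPlane := by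
  have hb : p (m + 1) - p m ≠ 0 := sub_ne_zero.mpr (hp.1 m (by omega)).symm
  have hd : p (m + 2) - p (m + 1) ≠ 0 := sub_ne_zero.mpr (hp.1 (m + 1) (by omega)).symm
  by_contra hc
  obtain ⟨τ, hτ, hτ0⟩ : ∃ τ : ℝ, p (m + 2) - p (m + 1) = -τ * (p (m + 1) - p m) ∧ 0 < τ := by
    set c := (p (m + 2) - p (m + 1)) / (p (m + 1) - p m) with hcdef
    have hcd : p (m + 2) - p (m + 1) = c * (p (m + 1) - p m) := by
      rw [hcdef, div_mul_cancel₀ _ hb]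
    rw [Complex.mem_slitPlane_iff, not_or, not_lt, not_not] at hc
    have hcre : c = -((-c.re : ℝ) : ℂ) := by
      apply Complex.ext <;> simp [hc.2]
    refine ⟨-c.re, by rw [← hcre]; exact hcd, ?_⟩
    rcases hc.1.eq_or_lt with h | h
    · exfalso
      apply hd
      rw [hcd, hcre, h]
      simp
    · linarith
  -- Both edges contain the point at fraction `min 1 τ` of the way back along the first one.
  have hs0 : 0 < min 1 τ := lt_min one_pos hτ0
  have hx : p (m + 1) + (min 1 τ) • -(p (m + 1) - p m) ∈ segment ℝ (p m) (p (m + 1)) := by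
    rw [segment_symm, show p m = p (m + 1) + -(p (m + 1) - p m) by ring]
    convert mem_segment_add_iff.mpr ⟨min 1 τ, ⟨hs0.le, min_le_left _ _⟩, rfl⟩ using 2
    ring_nf
  have hx' : p (m + 1) + (min 1 τ) • -(p (m + 1) - p m) ∈
      segment ℝ (p (m + 1)) (p (m + 2)) := by
    rw [show p (m + 2) = p (m + 1) + -τ * (p (m + 1) - p m) by rw [← hτ]; ring]
    refine mem_segment_add_iff.mpr
      ⟨min 1 τ / τ, ⟨by positivity, (div_le_one hτ0).mpr (min_le_right _ _)⟩, ?_⟩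
    have : (τ : ℂ) ≠ 0 := by exact_mod_cast hτ0.ne'
    simp only [Complex.real_smul, Complex.ofReal_div]
    field_simp
  have h := (hp.2 m (m + 1) (by omega) (by omega) _ hx hx').2
  rw [add_eq_left, smul_eq_zero, neg_eq_zero] at h
  exact h.elim hs0.ne' hb

/-- Along a path of simple chains, the last vertex keeps a positive distance from all edges
other than the last one. -/
theorem exists_pos_le_dist {m : ℕ} {l : ℕ → ℝ} {p q : ℕ → ℂ} (γ : Path p q)
    (hγ : ∀ t, γ t ∈ boundedChains (m + 1) l) :
    ∃ ε > 0, ∀ i < m, ∀ t, ∀ x ∈ segment ℝ (γ t i) (γ t (i + 1)),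
      ε ≤ dist x (γ t (m + 1)) := by
  have key : ∀ i < m, ∃ ε > 0, ∀ t, ∀ x ∈ segment ℝ (γ t i) (γ t (i + 1)),
      ε ≤ dist x (γ t (m + 1)) := by
    intro i hi
    let F : unitInterval × unitInterval → ℝ := fun y =>
      dist (AffineMap.lineMap (γ y.1 i) (γ y.1 (i + 1)) (y.2 : ℝ)) (γ y.1 (m + 1))
    have hcoord : ∀ k, Continuous fun y : unitInterval × unitInterval => γ y.1 k := fun k =>
      (continuous_apply k).comp (γ.continuous.comp continuous_fst)
    have hF : Continuous F := by
      have hs : Continuous fun y : unitInterval × unitInterval => (y.2 : ℝ) :=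
        continuous_subtype_val.comp continuous_snd
      simp only [F, AffineMap.lineMap_apply_module]
      exact (((continuous_const.sub hs).smul (hcoord i)).add (hs.smul (hcoord (i + 1)))).dist
        (hcoord (m + 1))
    obtain ⟨y₀, -, hy₀⟩ := isCompact_univ.exists_isMinOn univ_nonempty hF.continuousOn
    refine ⟨F y₀, ?_, fun t x hx => ?_⟩
    · refine dist_pos.mpr fun heq => ?_
      have hmem : AffineMap.lineMap (γ y₀.1 i) (γ y₀.1 (i + 1)) (y₀.2 : ℝ) ∈
          segment ℝ (γ y₀.1 i) (γ y₀.1 (i + 1)) := by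
        rw [segment_eq_image_lineMap]
        exact mem_image_of_mem _ y₀.2.2
      have h := (hγ y₀.1).1.2 i m hi (by omega) _ hmem
        (by rw [heq]; exact right_mem_segment _ _ _)
      exact (hγ y₀.1).1.1 m (by omega) (h.2.symm.trans heq)
    · rw [segment_eq_image_lineMap] at hx
      obtain ⟨s, hs, rfl⟩ := hx
      exact isMinOn_iff.mp hy₀ (t, ⟨s, hs⟩) (mem_univ _)
  have hall : ∀ᶠ ε in nhdsWithin (0 : ℝ) (Ioi 0), ∀ i ∈ Finset.range m,
      ∀ t, ∀ x ∈ segment ℝ (γ t i) (γ t (i + 1)), ε ≤ dist x (γ t (m + 1)) := by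
    rw [Filter.eventually_all_finset]
    intro i hi
    obtain ⟨ε, hε, h⟩ := key i (Finset.mem_range.mp hi)
    filter_upwards [Ioc_mem_nhdsGT hε] with ε' hε' t x hx
    exact hε'.2.trans (h t x hx)
  obtain ⟨ε, hε, hε0⟩ := (hall.and self_mem_nhdsWithin).exists
  exact ⟨ε, hε0, fun i hi => hε i (Finset.mem_range.mpr hi)⟩

/-- In a straight chain, all points of the edges before the last one lie strictly behind
the last vertex. -/
theorem exists_pos_of_mem_segment_of_straight {m : ℕ} {l : ℕ → ℝ} {q : ℕ → ℂ} {u : ℂ}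
    (hl : ∀ i < m + 1, 0 < l i) (hq : ∀ i < m + 1, q (i + 1) - q i = l i * u)
    {i : ℕ} (hi : i < m) {x : ℂ} (hx : x ∈ segment ℝ (q i) (q (i + 1))) :
    ∃ τ : ℝ, 0 < τ ∧ x = q (m + 1) - τ * u := by
  have hvert : ∀ k j, j + k = m → ∃ τ : ℝ, 0 < τ ∧ q j = q (m + 1) - τ * u := by
    intro k
    induction k with
    | zero =>
      rintro j rfl
      exact ⟨l j, hl j (by omega), by linear_combination -hq j (by omega)⟩
    | succ k ih =>
      intro j hj
      obtain ⟨τ, hτ, h⟩ := ih (j + 1) (by omega)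
      refine ⟨τ + l j, add_pos hτ (hl j (by omega)), ?_⟩
      push_cast
      linear_combination h - hq j (by omega)
  obtain ⟨τ₁, h₁, e₁⟩ := hvert (m - i) i (by omega)
  obtain ⟨τ₂, h₂, e₂⟩ := hvert (m - (i + 1)) (i + 1) (by omega)
  obtain ⟨a, b, ha, hb, hab, rfl⟩ := hx
  refine ⟨a * τ₁ + b * τ₂, ?_, ?_⟩
  · rcases ha.eq_or_lt with rfl | ha
    · obtain rfl : b = 1 := by linarith
      simpa using h₂
    · positivity
  · have hab' : (a : ℂ) + b = 1 := by exact_mod_cast hab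
    rw [e₁, e₂]
    simp only [Complex.real_smul]
    push_cast
    linear_combination q (m + 1) * hab'

/-- A simple planar chain can be deformed through simple chains, keeping its edges no longer
than prescribed bounds, to a straight chain with edges as long as the bounds. -/
theorem exists_joinedIn_straight {n : ℕ} (hn : 1 ≤ n) (l : ℕ → ℝ) (hl : ∀ i < n, 0 < l i)
    (p : ℕ → ℂ) (hp : p ∈ boundedChains n l) :
    ∃ (q : ℕ → ℂ) (u : ℂ), ‖u‖ = 1 ∧ JoinedIn (boundedChains n l) p q ∧
      ∀ i < n, q (i + 1) - q i = l i * u := by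
  induction n, hn using Nat.le_induction with
  | base =>
    have hl0 := hl 0 one_pos
    set a := p 1 - p 0 with ha
    have ha0 : a ≠ 0 := sub_ne_zero.mpr (hp.1.1 0 one_pos).symm
    have hna : 0 < ‖a‖ := norm_pos_iff.mpr ha0
    have hal : ‖a‖ ≤ l 0 := hp.2 0 one_pos
    let f : ℝ → ℕ → ℂ := fun s =>
      Function.update p 1 (p 0 + (((1 - s) + s * (l 0 / ‖a‖) : ℝ) : ℂ) * a)
    have hf0 : ∀ s, f s 0 = p 0 := fun s => Function.update_of_ne (by omega) _ _
    have hf1 : ∀ s, f s 1 = p 0 + (((1 - s) + s * (l 0 / ‖a‖) : ℝ) : ℂ) * a :=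
      fun s => Function.update_self _ _ _
    refine ⟨f 1, a / ‖a‖, by simp [hna.ne'], JoinedIn.ofLine (f := f) ?_ ?_ rfl ?_, ?_⟩
    · exact Continuous.continuousOn (by fun_prop)
    · simp [f, ha]
    · rintro _ ⟨s, hs, rfl⟩
      have hratio : 1 ≤ l 0 / ‖a‖ := (one_le_div hna).mpr hal
      have hpos : 0 < (1 - s) + s * (l 0 / ‖a‖) := by nlinarith [hs.1, hs.2]
      refine ⟨⟨fun i hi => ?_, fun i j hij hj => by omega⟩, fun i hi => ?_⟩
      · obtain rfl : i = 0 := by omega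
        rw [hf0, zero_add, hf1]
        have : (((1 - s) + s * (l 0 / ‖a‖) : ℝ) : ℂ) ≠ 0 := by exact_mod_cast hpos.ne'
        exact fun h => mul_ne_zero this ha0 (left_eq_add.mp h)
      · obtain rfl : i = 0 := by omega
        rw [hf0, zero_add, hf1, add_sub_cancel_left, norm_mul, Complex.norm_of_nonneg hpos.le]
        have : ((1 - s) + s * (l 0 / ‖a‖)) * ‖a‖ = (1 - s) * ‖a‖ + s * l 0 := by
          field_simp
        rw [this]
        nlinarith [hs.1, hs.2]
    · intro i hi
      obtain rfl : i = 0 := by omega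
      rw [hf0, zero_add, hf1]
      push_cast
      ring
  | succ n hn ih =>
    obtain ⟨m, rfl⟩ : ∃ m, n = m + 1 := ⟨n - 1, by omega⟩
    have hp' : p ∈ boundedChains (m + 1) l :=
      ⟨hp.1.mono (by omega), fun i hi => hp.2 i (by omega)⟩
    obtain ⟨q, u, hu, ⟨γ, hγ⟩, hq⟩ := ih (fun i hi => hl i (by omega)) hp'
    obtain ⟨ε, hε, hdist⟩ := exists_pos_le_dist γ hγ
    have hlm := hl m (by omega)
    have hlm' := hl (m + 1) (by omega)
    set c₀ := (p (m + 2) - p (m + 1)) / (p (m + 1) - p m) with hc₀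
    have hc₀s : c₀ ∈ Complex.slitPlane := hp.1.div_mem_slitPlane
    have hc₀n : 0 < ‖c₀‖ := norm_pos_iff.mpr (Complex.slitPlane_ne_zero hc₀s)
    have hb : p (m + 1) - p m ≠ 0 := sub_ne_zero.mpr (hp.1.1 m (by omega)).symm
    have hc₀b : c₀ * (p (m + 1) - p m) = p (m + 2) - p (m + 1) := by
      rw [hc₀, div_mul_cancel₀ _ hb]
    have hpext : extendChain m p c₀ = p := by
      simp [extendChain, hc₀b]
    obtain ⟨δ, hδ0, hδ1, hδε, hδl⟩ : ∃ δ : ℝ, 0 < δ ∧ δ ≤ 1 ∧ δ * (‖c₀‖ * l m) < ε ∧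
        δ * (‖c₀‖ * l m) ≤ l (m + 1) := by
      have hK : 0 < ‖c₀‖ * l m := by positivity
      refine ⟨min 1 (min ε (l (m + 1)) / (2 * (‖c₀‖ * l m))), by positivity,
        min_le_left _ _, ?_, ?_⟩
      all_goals
        have h1 : min 1 (min ε (l (m + 1)) / (2 * (‖c₀‖ * l m))) * (‖c₀‖ * l m) ≤
            min ε (l (m + 1)) / 2 :=
          (mul_le_mul_of_nonneg_right (min_le_right _ _) hK.le).trans_eq (by field_simp)
        have h2 := min_le_left ε (l (m + 1))
        have h3 := min_le_right ε (l (m + 1))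
        linarith
    have hscale : ∀ s : ℝ, 0 < s → (s : ℂ) * c₀ ∈ Complex.slitPlane := by
      intro s hs
      rw [Complex.mem_slitPlane_iff] at hc₀s ⊢
      simpa [hs, hs.ne'] using hc₀s
    have hshrink : JoinedIn (boundedChains (m + 2) l) p (extendChain m p (δ * c₀)) := by
      refine JoinedIn.ofLine
        (f := fun s : ℝ => extendChain m p (((1 - s) + s * δ : ℝ) * c₀)) ?_ ?_ ?_ ?_
      · exact ((continuous_extendChain m).comp (g := fun x : (ℕ → ℂ) × ℂ => extendChain m x.1 x.2)
          (f := fun s : ℝ => (p, (((1 - s) + s * δ : ℝ) : ℂ) * c₀)) (by fun_prop)).continuousOn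
      · simpa using hpext
      · simp
      · rintro _ ⟨s, hs, rfl⟩
        have hσ0 : 0 < (1 - s) + s * δ := by
          rcases hs.1.eq_or_lt with rfl | h
          · simp
          · nlinarith [hs.2, mul_pos h hδ0]
        have hσ1 : (1 - s) + s * δ ≤ 1 := by nlinarith [hs.1]
        beta_reduce
        generalize (1 - s) + s * δ = σ at hσ0 hσ1 ⊢
        refine extendChain_mem hp' (hscale σ hσ0) ?_ ?_
        · have := hp.2 (m + 1) (by omega)
          rw [show p (m + 1 + 1) = p (m + 2) from rfl, ← hc₀b, norm_mul] at this
          rw [norm_mul, Complex.norm_of_nonneg hσ0.le, mul_assoc]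
          exact (mul_le_of_le_one_left (by positivity) hσ1).trans this
        · intro i hi x hx hx'
          obtain ⟨t, ht, rfl⟩ := mem_segment_add_iff.mp hx'
          have hmem : p (m + 1) + t • ((σ : ℂ) * c₀ * (p (m + 1) - p m)) ∈
              segment ℝ (p (m + 1)) (p (m + 2)) := by
            rw [show p (m + 2) = p (m + 1) + c₀ * (p (m + 1) - p m) by rw [hc₀b]; ring]
            refine mem_segment_add_iff.mpr ⟨t * σ, ⟨by have := ht.1; positivity,
              mul_le_one₀ ht.2 hσ0.le hσ1⟩, ?_⟩
            simp only [Complex.real_smul]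
            push_cast
            ring
          have := (hp.1.2 i (m + 1) (by omega) (by omega) _ hx hmem).1
          omega
    have hfollow : JoinedIn (boundedChains (m + 2) l)
        (extendChain m p (δ * c₀)) (extendChain m q (δ * c₀)) := by
      refine ⟨γ.map (f := fun r => extendChain m r (δ * c₀))
        ((continuous_extendChain m).comp (Continuous.prodMk_left _)), fun t => ?_⟩
      have hlen : ‖(δ : ℂ) * c₀‖ * ‖γ t (m + 1) - γ t m‖ ≤ δ * (‖c₀‖ * l m) := by
        rw [norm_mul, Complex.norm_of_nonneg hδ0.le, mul_assoc]
        gcongr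
        exact (hγ t).2 m (by omega)
      refine extendChain_mem (hγ t) (hscale δ hδ0) (hlen.trans hδl) fun i hi x hx hx' => ?_
      have hd := hdist i hi t x hx
      obtain ⟨s, hs, rfl⟩ := mem_segment_add_iff.mp hx'
      rw [dist_eq_norm, add_sub_cancel_left, norm_smul, norm_mul, Real.norm_of_nonneg hs.1] at hd
      have := mul_le_of_le_one_left
        (show 0 ≤ ‖(δ : ℂ) * c₀‖ * ‖γ t (m + 1) - γ t m‖ by positivity) hs.2
      linarith
    have hqm : q (m + 1) - q m = l m * u := hq m (by omega)
    have hqn : ‖q (m + 1) - q m‖ = l m := by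
      rw [hqm, norm_mul, hu, mul_one, Complex.norm_of_nonneg hlm.le]
    have hu0 : u ≠ 0 := norm_pos_iff.mp (hu ▸ one_pos)
    have hlmC : (l m : ℂ) ≠ 0 := by exact_mod_cast hlm.ne'
    have hq' : q ∈ boundedChains (m + 1) l := by simpa using hγ 1
    have hturn : JoinedIn (boundedChains (m + 2) l) (extendChain m q (δ * c₀))
        (extendChain m q ((l (m + 1) / l m : ℝ) : ℂ)) := by
      refine JoinedIn.ofLine (f := fun s : ℝ => extendChain m q
        (((1 - s : ℝ) : ℂ) * (δ * c₀) + (s : ℂ) * ((l (m + 1) / l m : ℝ) : ℂ))) ?_ ?_ ?_ ?_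
      · exact ((continuous_extendChain m).comp (g := fun x : (ℕ → ℂ) × ℂ => extendChain m x.1 x.2)
          (f := fun s : ℝ => (q, ((1 - s : ℝ) : ℂ) * (δ * c₀) +
            (s : ℂ) * ((l (m + 1) / l m : ℝ) : ℂ))) (by fun_prop)).continuousOn
      · simp
      · simp
      · rintro _ ⟨s, hs, rfl⟩
        have hs1 : 0 ≤ 1 - s := sub_nonneg.mpr hs.2
        have hratio : 0 < l (m + 1) / l m := div_pos hlm' hlm
        have hcs : ((1 - s : ℝ) : ℂ) * (δ * c₀) + (s : ℂ) * ((l (m + 1) / l m : ℝ) : ℂ) ∈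
            Complex.slitPlane := by
          have h := hscale δ hδ0
          generalize (δ : ℂ) * c₀ = c at h
          generalize l (m + 1) / l m = ρ at hratio
          rw [Complex.mem_slitPlane_iff] at h ⊢
          simp only [Complex.add_re, Complex.add_im, Complex.re_ofReal_mul, Complex.im_ofReal_mul,
            Complex.ofReal_re, Complex.ofReal_im, mul_zero, add_zero]
          rcases hs1.eq_or_lt with hs2 | hs2
          · left
            rw [← hs2, zero_mul, zero_add]
            exact mul_pos (by linarith) hratio
          · rcases h with h | h
            · left
              have := mul_pos hs2 h
              have := mul_nonneg hs.1 hratio.le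
              linarith
            · right
              exact mul_ne_zero hs2.ne' h
        have hcn : ‖((1 - s : ℝ) : ℂ) * (δ * c₀) + (s : ℂ) * ((l (m + 1) / l m : ℝ) : ℂ)‖ ≤
            l (m + 1) / l m := by
          have h1 : ‖(δ : ℂ) * c₀‖ ≤ l (m + 1) / l m := by
            rw [le_div_iff₀ hlm, norm_mul, Complex.norm_of_nonneg hδ0.le, mul_assoc]
            exact hδl
          refine (norm_add_le _ _).trans ?_
          rw [norm_mul, norm_mul (s : ℂ), Complex.norm_of_nonneg hs1, Complex.norm_of_nonneg hs.1,
            Complex.norm_of_nonneg hratio.le]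
          nlinarith [mul_le_mul_of_nonneg_left h1 hs1]
        beta_reduce
        generalize ((1 - s : ℝ) : ℂ) * (δ * c₀) + (s : ℂ) * ((l (m + 1) / l m : ℝ) : ℂ) = c
          at hcs hcn ⊢
        refine extendChain_mem hq' hcs ?_ ?_
        · rw [hqn]
          exact (le_div_iff₀ hlm).mp hcn
        · intro i hi x hx hx'
          obtain ⟨τ, hτ, rfl⟩ := exists_pos_of_mem_segment_of_straight
            (fun i hi => hl i (by omega)) hq hi hx
          obtain ⟨t, ht, heq⟩ := mem_segment_add_iff.mp hx'
          have h : ((t * l m : ℝ) : ℂ) * c = ((-τ : ℝ) : ℂ) := by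
            apply mul_right_cancel₀ hu0
            rw [hqm, Complex.real_smul] at heq
            push_cast
            linear_combination -heq
          have hre := congrArg Complex.re h
          have him := congrArg Complex.im h
          rw [Complex.re_ofReal_mul, Complex.ofReal_re] at hre
          rw [Complex.im_ofReal_mul, Complex.ofReal_im] at him
          have htl : 0 ≤ t * l m := mul_nonneg ht.1 hlm.le
          rcases hcs with hc | hc
          · have := mul_nonneg htl hc.le
            linarith
          · rw [(mul_eq_zero.mp him).resolve_right hc] at hre
            linarith
    refine ⟨_, u, hu, (hshrink.trans hfollow).trans hturn, fun i hi => ?_⟩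
    rcases (show i ≤ m + 1 by omega).eq_or_lt with rfl | hi'
    · rw [extendChain_last, extendChain_of_le _ _ le_rfl, hqm]
      push_cast
      field_simp
      ring
    · rw [extendChain_of_le _ _ hi'.le, extendChain_of_le _ _ hi']
      exact hq i hi'

end PlanarChains

section Lifting

open scoped InnerProductSpace

/-- A plane in space is the isometric image of `ℂ`, and has a unit normal. -/
theorem exists_isometry_and_normal (D : Submodule ℝ E3) (hD : Module.finrank ℝ D = 2) :
    ∃ (g : ℂ →ₗᵢ[ℝ] E3) (N : E3), ‖N‖ = 1 ∧ (∀ z, ⟪g z, N⟫_ℝ = 0) ∧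
      (∀ x ∈ D, ∃ z, g z = x) ∧ ∀ x ∈ Dᗮ, ∃ c : ℝ, x = c • N := by
  have hD' : Module.finrank ℝ Dᗮ = 1 := by
    have := D.finrank_add_finrank_orthogonal
    rw [hD, finrank_euclideanSpace_fin] at this
    omega
  let e : ℂ ≃ₗᵢ[ℝ] D := (stdOrthonormalBasis ℝ ℂ).equiv (stdOrthonormalBasis ℝ D)
    (finCongr (by rw [hD, Complex.finrank_real_complex]))
  let e' : ℝ ≃ₗᵢ[ℝ] Dᗮ := (stdOrthonormalBasis ℝ ℝ).equiv (stdOrthonormalBasis ℝ Dᗮ)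
    (finCongr (by rw [hD', Module.finrank_self]))
  refine ⟨D.subtypeₗᵢ.comp e.toLinearIsometry, e' 1, ?_, fun z => ?_, fun x hx => ?_,
    fun x hx => ?_⟩
  · exact (e'.norm_map 1).trans norm_one
  · exact Submodule.inner_right_of_mem_orthogonal (e z).2 (e' 1).2
  · exact ⟨e.symm ⟨x, hx⟩, by simp⟩
  · refine ⟨e'.symm ⟨x, hx⟩, ?_⟩
    rw [← Submodule.coe_smul, ← map_smul]
    simp

theorem norm_sq_isometry_add_normal {g : ℂ →ₗᵢ[ℝ] E3} {N : E3} (hN : ‖N‖ = 1)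
    (hgN : ∀ z, ⟪g z, N⟫_ℝ = 0) (a : ℂ) (h : ℝ) :
    ‖g a + h • N‖ ^ 2 = ‖a‖ ^ 2 + h ^ 2 := by
  have := norm_add_sq_eq_norm_sq_add_norm_sq_of_inner_eq_zero (g a) (h • N)
    (by rw [inner_smul_right, hgN, mul_zero])
  rw [sq, this, g.norm_map, norm_smul, hN, Real.norm_eq_abs, mul_one, abs_mul_abs_self]
  ring

/-- A chain lying over a simple planar chain is simple. -/
theorem IsSimpleChain.lift {n : ℕ} {p : ℕ → ℂ} (hp : IsSimpleChain n p) {g : ℂ →ₗᵢ[ℝ] E3}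
    {N : E3} (hgN : ∀ z, ⟪g z, N⟫_ℝ = 0) (o : E3) (z : ℕ → ℝ) :
    IsSimpleChain n fun i => o + g (p i) + z i • N := by
  let A := g.toContinuousLinearMap.adjoint
  have hAg : ∀ x, A (g x) = x := fun x => ext_inner_right ℝ fun y => by
    rw [ContinuousLinearMap.adjoint_inner_left]
    exact g.inner_map_map x y
  have hAN : A N = 0 := ext_inner_right ℝ fun y => by
    rw [ContinuousLinearMap.adjoint_inner_left, inner_zero_left, real_inner_comm]
    exact hgN y
  refine IsSimpleChain.of_map
    (A.toLinearMap.toAffineMap + AffineMap.const ℝ E3 (-A o) : E3 →ᵃ[ℝ] ℂ) ?_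
  convert hp using 2 with i
  simp [hAg, hAN]

end Lifting

/-- A simple open polygonal chain in ℝ³ with a simple orthogonal
projection onto some plane can be straightened. -/
theorem straightenable_of_simple_orthogonal_projection (n : ℕ) (v : ℕ → E3)
    (hsimple : IsSimpleOpenChain n v)
    (hproj : HasSimpleOrthogonalProjection n v) :
    CanBeStraightened n v := by
  obtain ⟨S, w, hS, hw, hws⟩ := hproj
  obtain ⟨hn, hwsimple⟩ := isSimpleOpenChain_iff.mp hws
  obtain ⟨g, N, hN, hgN, hgD, hND⟩ := exists_isometry_and_normal S.direction hS
  have hcoord : ∀ i, ∃ (a : ℂ) (c : ℝ), i ≤ n → w i = w 0 + g a ∧ v i = w 0 + g a + c • N := by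
    intro i
    by_cases hi : i ≤ n
    · obtain ⟨a, ha⟩ := hgD _ (AffineSubspace.vsub_mem_direction (hw i hi).1 (hw 0 n.zero_le).1)
      obtain ⟨c, hc⟩ := hND _ (hw i hi).2
      rw [vsub_eq_sub] at ha
      refine ⟨a, c, fun _ => ⟨by rw [ha]; abel, by rw [ha, ← hc]; abel⟩⟩
    · exact ⟨0, 0, fun h => absurd h hi⟩
  choose p z hpz using hcoord
  have hpsimple : IsSimpleChain n p := by
    refine IsSimpleChain.of_map (g.toLinearMap.toAffineMap + AffineMap.const ℝ ℂ (w 0)) ?_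
    have heq : ∀ i ≤ n, (g.toLinearMap.toAffineMap + AffineMap.const ℝ ℂ (w 0) : ℂ →ᵃ[ℝ] E3) (p i)
        = w i := fun i hi => by
      rw [(hpz i hi).1]
      simp [add_comm]
    refine ⟨fun i hi => ?_, fun i j hij hj => ?_⟩
    · beta_reduce
      rw [heq i (by omega), heq (i + 1) (by omega)]
      exact hwsimple.1 i hi
    · beta_reduce
      rw [heq i (by omega), heq (i + 1) (by omega), heq j (by omega), heq (j + 1) (by omega)]
      exact hwsimple.2 i j hij hj
  have hvdiff : ∀ i < n, v (i + 1) - v i = g (p (i + 1) - p i) + (z (i + 1) - z i) • N := by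
    intro i hi
    rw [(hpz (i + 1) (by omega)).2, (hpz i (by omega)).2, map_sub, sub_smul]
    abel
  set l : ℕ → ℝ := fun i => ‖v (i + 1) - v i‖ with hl
  have hlsq : ∀ i < n, l i ^ 2 = ‖p (i + 1) - p i‖ ^ 2 + (z (i + 1) - z i) ^ 2 := fun i hi => by
    simp only [hl, hvdiff i hi, norm_sq_isometry_add_normal hN hgN]
  have hlpos : ∀ i < n, 0 < l i := fun i hi =>
    norm_pos_iff.mpr (sub_ne_zero.mpr ((isSimpleOpenChain_iff.mp hsimple).2.1 i hi).symm)
  have hpl : p ∈ boundedChains n l := by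
    refine ⟨hpsimple, fun i hi => abs_le_of_sq_le_sq' ?_ (hlpos i hi).le |>.2⟩
    nlinarith [hlsq i hi, sq_nonneg (z (i + 1) - z i)]
  obtain ⟨q, u, hu, ⟨γ, hγ⟩, hq⟩ := exists_joinedIn_straight hn l hlpos p hpl
  let ε : ℕ → ℝ := fun j => if 0 ≤ z (j + 1) - z j then 1 else -1
  have hεsq : ∀ j, ε j ^ 2 = 1 := fun j => by
    simp only [ε]
    split_ifs <;> norm_num
  let H : (ℕ → ℂ) → ℕ → ℝ := fun r i =>
    z 0 + ∑ j ∈ Finset.range i, ε j * √(l j ^ 2 - ‖r (j + 1) - r j‖ ^ 2)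
  have hH : ∀ r i, H r (i + 1) - H r i = ε i * √(l i ^ 2 - ‖r (i + 1) - r i‖ ^ 2) := fun r i => by
    simp only [H, Finset.sum_range_succ]
    ring
  have hext : ∀ t, γ.extend t ∈ boundedChains n l := fun t => hγ _
  refine ⟨fun t i => w 0 + g (γ.extend t i) + H (γ.extend t) i • N, ⟨?_, ?_, ?_, ?_⟩, ?_⟩
  · intro i _
    have hc : ∀ k, Continuous fun t => γ.extend t k := fun k =>
      (continuous_apply k).comp γ.continuous_extend
    have hcH : Continuous fun t => H (γ.extend t) i := by
      simp only [H]
      fun_prop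
    have := g.continuous.comp (hc i)
    exact Continuous.continuousOn ((continuous_const.add this).add (hcH.smul continuous_const))
  · intro i hi
    have hHz : ∀ i ≤ n, H p i = z i := by
      intro i
      induction i with
      | zero => simp [H]
      | succ i ih =>
        intro hi
        have h := hH p i
        rw [ih (by omega), hlsq i (by omega), add_sub_cancel_left, Real.sqrt_sq_eq_abs] at h
        have hε : ε i * |z (i + 1) - z i| = z (i + 1) - z i := by
          simp only [ε]
          split_ifs with h0
          · rw [abs_of_nonneg h0, one_mul]
          · rw [abs_of_neg (not_le.mp h0)]
            ring
        linarith
    simp only [γ.extend_zero]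
    rw [hHz i hi, (hpz i hi).2]
  · exact fun t _ => isSimpleOpenChain_iff.mpr ⟨hn, (hext t).1.lift hgN _ _⟩
  · intro t _ i hi
    have hle := (hext t).2 i hi
    rw [show w 0 + g (γ.extend t (i + 1)) + H (γ.extend t) (i + 1) • N -
        (w 0 + g (γ.extend t i) + H (γ.extend t) i • N) =
        g (γ.extend t (i + 1) - γ.extend t i) +
          (H (γ.extend t) (i + 1) - H (γ.extend t) i) • N by
      rw [map_sub, sub_smul]; abel]
    refine (sq_eq_sq₀ (norm_nonneg _) (norm_nonneg _)).mp ?_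
    rw [norm_sq_isometry_add_normal hN hgN, hH, mul_pow, hεsq, one_mul, Real.sq_sqrt]
    · ring
    · have := pow_le_pow_left₀ (norm_nonneg _) hle 2
      linarith
  · refine ⟨w 0 + g (q 0) + z 0 • N, g u, by rw [g.norm_map, hu], fun i hi => ?_⟩
    have hqi : ∀ i ≤ n, q i = q 0 + (∑ j ∈ Finset.range i, l j) • u := by
      intro i
      induction i with
      | zero => simp
      | succ i ih =>
        intro hi
        rw [Finset.sum_range_succ, add_smul, ← add_assoc, ← ih (by omega), Complex.real_smul,
          ← hq i (by omega)]
        ring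
    have hHq : H q i = z 0 := by
      simp only [H, add_eq_left]
      refine Finset.sum_eq_zero fun j hj => ?_
      have hj' : j < n := by
        have := Finset.mem_range.mp hj
        omega
      rw [hq j hj', norm_mul, hu, mul_one, Complex.norm_of_nonneg (hlpos j hj').le]
      simp
    simp only [γ.extend_one]
    rw [hHq, hqi i hi, map_add, map_smul]
    abel
end
end

section
/- If a simple open polygonal chain in ℝ³ lies on the surface of a convex polytope (every edge of the chain is contained in the topological boundary of a compact convex set with nonempty interior), then the chain can be straightened, i.e., there is a motion (a continuous, simplicity-preserving, edge-length-preserving deformation) taking it to a straight configuration. -/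
noncomputable section

/-- The simple open chains with `n` edges that have the same edge lengths as `v`. -/
def chainConfigurations (n : ℕ) (v : ℕ → E3) : Set (ℕ → E3) :=
  {w | IsSimpleOpenChain n w ∧ ∀ i, i < n → ‖w (i + 1) - w i‖ = ‖v (i + 1) - v i‖}

theorem canBeStraightened_of_joinedIn {n : ℕ} {v w : ℕ → E3}
    (h : JoinedIn (chainConfigurations n v) v w) (hw : IsStraightening n v w) :
    CanBeStraightened n v := by
  obtain ⟨γ, hγ⟩ := h
  have hmem : ∀ t ∈ Set.Icc (0 : ℝ) 1, γ.extend t ∈ chainConfigurations n v := by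
    intro t ht
    rw [γ.extend_apply ht]
    exact hγ _
  refine ⟨γ.extend, ⟨fun i _ => ?_, fun i _ => by rw [γ.extend_zero], fun t ht => (hmem t ht).1,
    fun t ht => (hmem t ht).2⟩, by rwa [γ.extend_one]⟩
  exact ((continuous_apply i).comp γ.continuous_extend).continuousOn

/-- A chain that agrees with a simple chain `v` from vertex `k + 1` on is simple as soon as some
linear functional strictly decreases along its first `k + 1` edges and is nowhere larger on the
remaining vertices. -/
theorem isSimpleOpenChain_of_strictly_decreasing {n k : ℕ} {v w : ℕ → E3}
    (hv : IsSimpleOpenChain n v) (hk : k < n) (f : E3 →L[ℝ] ℝ)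
    (hwv : ∀ i, k + 1 ≤ i → w i = v i)
    (hdec : ∀ i j, i < j → j ≤ k + 1 → f (w j) < f (w i))
    (hle : ∀ i, k + 1 ≤ i → i ≤ n → f (v i) ≤ f (v (k + 1))) :
    IsSimpleOpenChain n w := by
  have hlt : ∀ i m, i ≤ k → i < m → m ≤ n → f (w m) < f (w i) := by
    intro i m hi him hm
    rcases le_or_gt m (k + 1) with h | h
    · exact hdec i m him h
    · have h1 := hdec i (k + 1) (by omega) le_rfl
      have h2 := hle m h.le hm
      rw [hwv m h.le]
      rw [hwv (k + 1) le_rfl] at h1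
      linarith
  have hweak : ∀ i m, i ≤ k → i + 1 ≤ m → m ≤ n → f (w m) ≤ f (w (i + 1)) := by
    intro i m hi him hm
    rcases eq_or_lt_of_le him with rfl | h
    · exact le_rfl
    rcases Nat.lt_or_ge i k with h' | h'
    · exact (hlt (i + 1) m h' h hm).le
    · obtain rfl : i = k := by omega
      rw [hwv m (by omega), hwv _ le_rfl]
      exact hle m (by omega) hm
  refine ⟨hv.1, ?_, ?_⟩
  · have key : ∀ i j, i < j → j ≤ n → w i ≠ w j := by
      intro i j hij hj he
      rcases le_or_gt i k with h | h
      · exact (hlt i j h hij hj).ne (by rw [he])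
      · rw [hwv i h, hwv j (by omega)] at he
        exact hv.2.1 i j (by omega) hj hij.ne he
    intro i j hi hj hij
    rcases lt_or_gt_of_ne hij with h | h
    · exact key i j h hj
    · exact (key j i h hi).symm
  · intro i j hij hj
    rcases Nat.lt_or_ge k i with hik | hik
    · rw [hwv i hik, hwv (i + 1) (by omega), hwv j (by omega), hwv (j + 1) (by omega)]
      exact hv.2.2 i j hij hj
    have hx : ∀ x ∈ segment ℝ (w i) (w (i + 1)) ∩ segment ℝ (w j) (w (j + 1)),
        x = w (i + 1) := by
      rintro x ⟨⟨a, b, ha, hb, hab, rfl⟩, a', b', ha', hb', hab', he⟩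
      have h1 := hlt i (i + 1) hik (Nat.lt_succ_self i) (by omega)
      have h2 := hweak i j hik hij hj.le
      have h3 := hweak i (j + 1) hik (by omega) hj
      have h4 := congrArg f he
      simp only [map_add, map_smul, smul_eq_mul] at h4
      have ha0 : a = 0 := by
        by_contra hne
        have hapos : 0 < a := lt_of_le_of_ne ha (Ne.symm hne)
        obtain rfl : b = 1 - a := by linarith
        obtain rfl : b' = 1 - a' := by linarith
        nlinarith [mul_le_mul_of_nonneg_left h2 ha', mul_le_mul_of_nonneg_left h3 hb',
          mul_lt_mul_of_pos_left h1 hapos]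
      obtain rfl : b = 1 := by linarith
      simp [ha0]
    split_ifs with hij1
    · subst hij1
      refine Set.eq_singleton_iff_unique_mem.2 ⟨⟨?_, ?_⟩, hx⟩
      · exact right_mem_segment ℝ _ _
      · exact left_mem_segment ℝ _ _
    · rw [Set.eq_empty_iff_forall_notMem]
      intro x hmem
      have hxe := hx x hmem
      subst hxe
      rcases Nat.lt_or_ge i k with h | h
      · obtain ⟨a, b, ha, hb, hab, he⟩ := hmem.2
        have h2 := hlt (i + 1) j h (by omega) hj.le
        have h3 := hlt (i + 1) (j + 1) h (by omega) hj
        have h4 := congrArg f he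
        simp only [map_add, map_smul, smul_eq_mul] at h4
        obtain rfl : b = 1 - a := by linarith
        rcases eq_or_lt_of_le ha with h0 | h0
        · subst h0
          linarith
        · nlinarith [mul_le_mul_of_nonneg_left h3.le hb, mul_lt_mul_of_pos_left h2 h0]
      · obtain rfl : i = k := by omega
        have h2 := hmem.2
        rw [hwv (i + 1) le_rfl, hwv j (by omega), hwv (j + 1) (by omega)] at h2
        have h3 := hv.2.2 i j hij hj
        rw [if_neg hij1] at h3
        exact Set.eq_empty_iff_forall_notMem.1 h3 _ ⟨right_mem_segment ℝ _ _, h2⟩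

/-- The chain `v` with its first `k + 1` edges replaced by an edge from `v (k + 1)` in direction `e`
followed by a straight arm in direction `a`. -/
def bentArm (v : ℕ → E3) (k : ℕ) (e a : E3) (i : ℕ) : E3 :=
  if i ≤ k then
    v (k + 1) + ‖v (k + 1) - v k‖ • e + (∑ j ∈ Finset.Ico i k, ‖v (j + 1) - v j‖) • a
  else v i

theorem continuousOn_bentArm (v : ℕ → E3) (k : ℕ) {e a : ℝ → E3} {s : Set ℝ}
    (he : ContinuousOn e s) (ha : ContinuousOn a s) :
    ContinuousOn (fun t => bentArm v k (e t) (a t)) s := by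
  refine continuousOn_pi.2 fun i => ?_
  by_cases h : i ≤ k
  · simp only [bentArm, if_pos h]
    fun_prop
  · simp only [bentArm, if_neg h]
    fun_prop

theorem bentArm_mem_chainConfigurations {n k : ℕ} {v : ℕ → E3} {e a : E3}
    (hv : IsSimpleOpenChain n v) (hk : k < n) (f : E3 →L[ℝ] ℝ)
    (hle : ∀ i, i ≤ n → f (v i) ≤ f (v (k + 1)))
    (he : ‖e‖ = 1) (ha : ‖a‖ = 1) (hfe : 0 < f e) (hfa : 0 < f a) :
    bentArm v k e a ∈ chainConfigurations n v := by
  have hpos : ∀ i, i < n → 0 < ‖v (i + 1) - v i‖ := fun i hi =>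
    norm_pos_iff.2 (sub_ne_zero.2 (hv.2.1 _ _ hi hi.le (Nat.succ_ne_self i)))
  have hstep : ∀ i, i ≤ k → bentArm v k e a i - bentArm v k e a (i + 1) =
      ‖v (i + 1) - v i‖ • (if i < k then a else e) := by
    intro i hi
    rcases Nat.lt_or_ge i k with h | h
    · simp only [bentArm, if_pos hi, if_pos h, if_pos (Nat.succ_le_of_lt h),
        Finset.sum_eq_sum_Ico_succ_bot h, add_smul]
      abel
    · obtain rfl : i = k := by omega
      simp [bentArm]
  refine ⟨isSimpleOpenChain_of_strictly_decreasing hv hk f ?_ ?_ fun i _ => hle i, ?_⟩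
  · intro i hi
    rw [bentArm, if_neg (by omega)]
  · intro i j hij
    induction j, hij using Nat.le_induction with
    | base =>
      intro hi
      have h := congrArg f (hstep i (by omega))
      have hp := hpos i (by omega)
      have : 0 < f (if i < k then a else e) := by split_ifs <;> assumption
      rw [map_sub, map_smul, smul_eq_mul] at h
      nlinarith [mul_pos hp this]
    | succ j hij ih =>
      intro hj
      have h := congrArg f (hstep j (by omega))
      have hp := hpos j (by omega)
      have : 0 < f (if j < k then a else e) := by split_ifs <;> assumption
      rw [map_sub, map_smul, smul_eq_mul] at h
      nlinarith [mul_pos hp this, ih (by omega)]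
  · intro i hi
    rcases Nat.lt_or_ge k i with h | h
    · rw [bentArm, bentArm, if_neg (by omega), if_neg (by omega)]
    · rw [norm_sub_rev, hstep i h, norm_smul, norm_norm]
      split_ifs <;> simp [he, ha]

/-- The chain `v` with its first `k` edges replaced by a straight arm at `v k` pointing away
from `c`. -/
def radialArm (v : ℕ → E3) (c : E3) (k i : ℕ) : E3 :=
  if i ≤ k then
    v k + (∑ j ∈ Finset.Ico i k, ‖v (j + 1) - v j‖) • NormedSpace.normalize (v k - c)
  else v i

theorem radialArm_zero (v : ℕ → E3) (c : E3) : radialArm v c 0 = v := by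
  funext i
  rcases Nat.eq_zero_or_pos i with rfl | h
  · simp [radialArm]
  · rw [radialArm, if_neg (by omega)]

theorem bentArm_eq_radialArm (v : ℕ → E3) (c : E3) (k : ℕ) :
    bentArm v k (NormedSpace.normalize (v k - v (k + 1))) (NormedSpace.normalize (v k - c)) =
      radialArm v c k := by
  funext i
  by_cases h : i ≤ k
  · rw [bentArm, radialArm, if_pos h, if_pos h, norm_sub_rev, NormedSpace.norm_smul_normalize,
      add_sub_cancel]
  · rw [bentArm, radialArm, if_neg h, if_neg h]

theorem bentArm_eq_radialArm_succ (v : ℕ → E3) (c : E3) (k : ℕ) :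
    bentArm v k (NormedSpace.normalize (v (k + 1) - c)) (NormedSpace.normalize (v (k + 1) - c)) =
      radialArm v c (k + 1) := by
  funext i
  rcases lt_trichotomy i (k + 1) with h | rfl | h
  · rw [bentArm, radialArm, if_pos (by omega), if_pos (by omega),
      Finset.sum_Ico_succ_top (by omega), add_smul]
    abel
  · simp [bentArm, radialArm]
  · rw [bentArm, radialArm, if_neg (by omega), if_neg (by omega)]

theorem isStraightening_radialArm {n : ℕ} {v : ℕ → E3} {c : E3} (hc : v n ≠ c) :
    IsStraightening n v (radialArm v c n) := by
  refine ⟨radialArm v c n 0, -NormedSpace.normalize (v n - c), ?_, fun i hi => ?_⟩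
  · rw [norm_neg, NormedSpace.norm_normalize_eq_one_iff]
    exact sub_ne_zero.2 hc
  · rw [radialArm, radialArm, if_pos hi, if_pos (Nat.zero_le n), ← Finset.range_eq_Ico,
      ← Finset.sum_range_add_sum_Ico _ hi]
    module

/-- A segment in the boundary of a convex body lies in a supporting hyperplane. -/
theorem exists_support_of_segment_subset_frontier {C : Set E3} (hconv : Convex ℝ C)
    (hcl : IsClosed C) {c x y : E3} (hc : c ∈ interior C) (hxy : segment ℝ x y ⊆ frontier C) :
    ∃ f : E3 →L[ℝ] ℝ, f x = f y ∧ f c < f y ∧ ∀ z ∈ C, f z ≤ f y := by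
  have hm : midpoint ℝ x y ∈ frontier C := hxy (midpoint_mem_segment x y)
  obtain ⟨f, hf⟩ := geometric_hahn_banach_open_point hconv.interior isOpen_interior hm.2
  have hC : ∀ z ∈ C, f z ≤ f (midpoint ℝ x y) := by
    intro z hz
    have hz' : z ∈ closure (interior C) := by
      rw [hconv.closure_interior_eq_closure_of_nonempty_interior ⟨c, hc⟩]
      exact subset_closure hz
    exact closure_minimal (fun w hw => (hf w hw).le)
      (isClosed_le f.continuous continuous_const) hz'
  have hx := hC x (hcl.frontier_subset (hxy (left_mem_segment ℝ x y)))
  have hy := hC y (hcl.frontier_subset (hxy (right_mem_segment ℝ x y)))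
  have hmid : f (midpoint ℝ x y) = (f x + f y) / 2 := by
    rw [midpoint_eq_smul_add, map_smul, map_add, smul_eq_mul, invOf_eq_inv]
    ring
  have hfc := hf c hc
  refine ⟨f, by linarith, by linarith, fun z hz => ?_⟩
  have := hC z hz
  linarith

theorem joinedIn_radialArm_succ {n k : ℕ} {v : ℕ → E3} {c : E3} (hv : IsSimpleOpenChain n v)
    (hk : k < n) (f : E3 →L[ℝ] ℝ) (hf : f (v k) = f (v (k + 1))) (hfc : f c < f (v (k + 1)))
    (hle : ∀ i, i ≤ n → f (v i) ≤ f (v (k + 1)))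
    (hmem : radialArm v c k ∈ chainConfigurations n v) :
    JoinedIn (chainConfigurations n v) (radialArm v c k) (radialArm v c (k + 1)) := by
  let e : ℝ → E3 := fun t => (1 - t) • (v k - v (k + 1)) + t • (v (k + 1) - c)
  let a : ℝ → E3 := fun t => (1 - t) • (v k - c) + t • (v (k + 1) - c)
  have hfe : ∀ t, f (e t) = t * (f (v (k + 1)) - f c) := by
    intro t
    simp only [e, map_add, map_smul, map_sub, smul_eq_mul, hf]
    ring
  have hfa : ∀ t, f (a t) = f (v (k + 1)) - f c := by
    intro t
    simp only [a, map_add, map_smul, map_sub, smul_eq_mul, hf]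
    ring
  have hfe_pos : ∀ t, 0 < t → 0 < f (e t) := fun t ht => by
    rw [hfe]
    exact mul_pos ht (sub_pos.2 hfc)
  have hfa_pos : ∀ t, 0 < f (a t) := fun t => by
    rw [hfa]
    exact sub_pos.2 hfc
  have ne_zero_of_pos : ∀ x, 0 < f x → x ≠ 0 := by
    rintro x hx rfl
    simp at hx
  have he_ne : ∀ t, 0 ≤ t → e t ≠ 0 := by
    intro t ht
    rcases eq_or_lt_of_le ht with rfl | h
    · simpa [e, sub_eq_zero] using hv.2.1 k (k + 1) hk.le hk (Nat.succ_ne_self k).symm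
    · exact ne_zero_of_pos _ (hfe_pos t h)
  have ha_ne : ∀ t, a t ≠ 0 := fun t => ne_zero_of_pos _ (hfa_pos t)
  have hnorm_pos : ∀ x, 0 < f x → 0 < f (NormedSpace.normalize x) := by
    intro x hx
    rw [NormedSpace.normalize, map_smul, smul_eq_mul]
    exact mul_pos (inv_pos.2 (norm_pos_iff.2 (ne_zero_of_pos x hx))) hx
  have hec : Continuous e := by fun_prop
  have hac : Continuous a := by fun_prop
  have hcont {g : ℝ → E3} (hg : Continuous g) (hg0 : ∀ t, 0 ≤ t → g t ≠ 0) :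
      ContinuousOn (fun t => NormedSpace.normalize (g t)) (Set.Icc 0 1) :=
    (hg.norm.continuousOn.inv₀ fun t ht => norm_ne_zero_iff.2 (hg0 t ht.1)).smul hg.continuousOn
  have hstart : bentArm v k (NormedSpace.normalize (e 0)) (NormedSpace.normalize (a 0)) =
      radialArm v c k := by
    simpa [e, a] using bentArm_eq_radialArm v c k
  refine JoinedIn.ofLine
    (f := fun t => bentArm v k (NormedSpace.normalize (e t)) (NormedSpace.normalize (a t)))
    ?_ hstart ?_ ?_
  · exact continuousOn_bentArm v k (hcont hec he_ne) (hcont hac fun t _ => ha_ne t)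
  · simpa [e, a] using bentArm_eq_radialArm_succ v c k
  · rintro _ ⟨t, ht, rfl⟩
    rcases eq_or_lt_of_le ht.1 with rfl | h
    · simpa only [hstart] using hmem
    · exact bentArm_mem_chainConfigurations hv hk f hle
        (NormedSpace.norm_normalize_eq_one_iff.2 (he_ne t ht.1))
        (NormedSpace.norm_normalize_eq_one_iff.2 (ha_ne t))
        (hnorm_pos _ (hfe_pos t h)) (hnorm_pos _ (hfa_pos t))

/-- A simple open polygonal chain in ℝ³ lying on the surface of a
convex polytope (every edge contained in the topological boundary of a compact
convex set with nonempty interior) can be straightened. -/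
theorem straightenable_of_on_convex_surface (n : ℕ) (v : ℕ → E3)
    (hsimple : IsSimpleOpenChain n v)
    (C : Set E3) (hconv : Convex ℝ C) (hcpt : IsCompact C)
    (hint : (interior C).Nonempty)
    (hedges : ∀ i, i < n → segment ℝ (v i) (v (i + 1)) ⊆ frontier C) :
    CanBeStraightened n v := by
  obtain ⟨c, hc⟩ := hint
  have hfr : ∀ i, i ≤ n → v i ∈ frontier C := by
    intro i hi
    rcases Nat.lt_or_ge i n with h | h
    · exact hedges i h (left_mem_segment ℝ _ _)
    · obtain ⟨m, rfl⟩ : ∃ m, i = m + 1 := ⟨i - 1, by have := hsimple.1; omega⟩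
      exact hedges m hi (right_mem_segment ℝ _ _)
  have hjoin : ∀ k, k ≤ n → JoinedIn (chainConfigurations n v) v (radialArm v c k) := by
    intro k
    induction k with
    | zero =>
      intro _
      rw [radialArm_zero]
      exact JoinedIn.refl ⟨hsimple, fun _ _ => rfl⟩
    | succ k ih =>
      intro hk
      have h := ih (by omega)
      obtain ⟨f, hf, hfc, hfC⟩ :=
        exists_support_of_segment_subset_frontier hconv hcpt.isClosed hc (hedges k hk)
      exact h.trans (joinedIn_radialArm_succ hsimple hk f hf hfc
        (fun i hi => hfC _ (hcpt.isClosed.frontier_subset (hfr i hi))) h.target_mem)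
  refine canBeStraightened_of_joinedIn (hjoin n le_rfl) (isStraightening_radialArm ?_)
  rintro rfl
  exact (hfr n le_rfl).2 hc
end
end

section
/- Every simple open polygonal chain contained in a plane of ℝ³ can be straightened by a motion in ℝ³, i.e., there is a continuous, simplicity-preserving, edge-length-preserving deformation in ℝ³ taking it to a straight configuration. -/
noncomputable section

/-- To check that a chain with nondegenerate edges is simple, it suffices to control common points
of pairs of edges. -/
lemma isSimpleOpenChain_of_edges {n : ℕ} {w : ℕ → E3} (hn : 1 ≤ n)
    (hne : ∀ i, i < n → w i ≠ w (i + 1))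
    (hedge : ∀ j k x, j < k → k < n → x ∈ segment ℝ (w j) (w (j + 1)) →
      x ∈ segment ℝ (w k) (w (k + 1)) → j + 1 = k ∧ x = w k) :
    IsSimpleOpenChain n w := by
  have hlt : ∀ i j, i < j → j ≤ n → w i ≠ w j := by
    intro i j hij hj h
    obtain ⟨m, rfl⟩ : ∃ m, j = m + 1 := ⟨j - 1, by omega⟩
    rcases Nat.lt_or_ge i m with him | him
    · obtain ⟨rfl, hx⟩ := hedge i m (w i) him (by omega) (left_mem_segment ℝ _ _)
        (h ▸ right_mem_segment ℝ _ _)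
      exact hne i (by omega) hx
    · obtain rfl : i = m := by omega
      exact hne i (by omega) h
  refine ⟨hn, ?_, ?_⟩
  · intro i j hi hj hij
    rcases Nat.lt_or_gt_of_ne hij with h | h
    · exact hlt i j h hj
    · exact (hlt j i h hi).symm
  · intro j k hjk hk
    ext x
    constructor
    · rintro ⟨h1, h2⟩
      obtain ⟨h, rfl⟩ := hedge j k x hjk hk h1 h2
      simp [h]
    · split_ifs with h
      · rintro rfl
        subst h
        exact ⟨right_mem_segment ℝ _ _, left_mem_segment ℝ _ _⟩
      · exact fun h => h.elim

/-- The configuration in which the edges before `i` have been raised to a vertical strand and the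
edge `i` is rotated upwards about its end `v (i + 1)` is again a simple chain. -/
lemma IsSimpleOpenChain.lifted {n : ℕ} {v w : ℕ → E3} (hv : IsSimpleOpenChain n v)
    {e : E3} (he : ‖e‖ = 1) {a : ℝ} (ha : ∀ k, k ≤ n → inner ℝ e (v k) = a)
    {i : ℕ} (hi : i < n) {c s : ℝ} (hc : 0 ≤ c) (hs : 0 ≤ s) (hcs : c ^ 2 + s ^ 2 = 1)
    (hne : ∀ k, k < n → w k ≠ w (k + 1))
    (hflat : ∀ k, i < k → k ≤ n → w k = v k)
    (hrot : w i = v (i + 1) + (c • (v i - v (i + 1)) + (s * ‖v (i + 1) - v i‖) • e))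
    (hvert : ∀ k, k < i → w k = w (k + 1) + ‖v (k + 1) - v k‖ • e) :
    IsSimpleOpenChain n w := by
  obtain ⟨hn, hinj, hint⟩ := hv
  have hee : inner ℝ e e = (1 : ℝ) := by simp [he]
  have hpos : ∀ k, k < n → 0 < ‖v (k + 1) - v k‖ := fun k hk =>
    norm_pos_iff.2 (sub_ne_zero.2 (hinj _ _ (by omega) (by omega) (by omega)))
  have hfi : inner ℝ e (w i) = a + s * ‖v (i + 1) - v i‖ := by
    rw [hrot]
    simp only [inner_add_right, inner_sub_right, inner_smul_right, hee, ha i (by omega),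
      ha (i + 1) (by omega)]
    ring
  have hfi' : a ≤ inner ℝ e (w i) := by
    rw [hfi]; nlinarith [hpos i hi]
  have hstep : ∀ k, k < i → inner ℝ e (w k) = inner ℝ e (w (k + 1)) + ‖v (k + 1) - v k‖ := by
    intro k hk
    conv_lhs => rw [hvert k hk]
    simp only [inner_add_right, inner_smul_right, hee, mul_one]
  have hmono : ∀ j d, j + d ≤ i → inner ℝ e (w (j + d)) ≤ inner ℝ e (w j) := by
    intro j d
    induction d with
    | zero => simp
    | succ d ih =>
      intro h
      have h1 := ih (by omega)
      have h2 := hstep (j + d) (by omega)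
      have h3 := hpos (j + d) (by omega)
      rw [← add_assoc]
      linarith
  have hle : ∀ j k, j ≤ k → k ≤ i → inner ℝ e (w k) ≤ inner ℝ e (w j) := by
    intro j k hjk hk
    obtain ⟨d, rfl⟩ := Nat.exists_eq_add_of_le hjk
    exact hmono j d hk
  have hlt : ∀ j k, j < k → k ≤ i → inner ℝ e (w k) < inner ℝ e (w j) := by
    intro j k hjk hk
    have h1 := hle (j + 1) k hjk hk
    have h2 := hstep j (by omega)
    have h3 := hpos j (by omega)
    linarith
  have hstrand : ∀ d k, k + d = i → w k = w i + (inner ℝ e (w k) - inner ℝ e (w i)) • e := by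
    intro d
    induction d with
    | zero => rintro k rfl; simp
    | succ d ih =>
      intro k hk
      have h1 := ih (k + 1) (by omega)
      rw [hstep k (by omega)]
      conv_lhs => rw [hvert k (by omega), h1]
      module
  -- A point of a vertical edge lies on the strand, at a height between those of the endpoints.
  have hedge_vert : ∀ j x, j < i → x ∈ segment ℝ (w j) (w (j + 1)) →
      inner ℝ e (w (j + 1)) ≤ inner ℝ e x ∧ inner ℝ e x ≤ inner ℝ e (w j) ∧
        x = w i + (inner ℝ e x - inner ℝ e (w i)) • e := by
    rintro j x hj ⟨p, q, hp, hq, hpq, rfl⟩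
    have h0 := hlt j (j + 1) (by omega) hj
    have h1 := hstrand (i - j) j (by omega)
    have h2 := hstrand (i - (j + 1)) (j + 1) (by omega)
    obtain rfl : q = 1 - p := by linarith
    simp only [inner_add_right, inner_smul_right]
    refine ⟨by nlinarith, by nlinarith, ?_⟩
    conv_lhs => rw [h1, h2]
    module
  have hedge_rot : ∀ x, x ∈ segment ℝ (w i) (w (i + 1)) →
      inner ℝ e x ≤ inner ℝ e (w i) ∧
        (inner ℝ e x = a → x ∈ segment ℝ (v i) (v (i + 1))) := by
    rintro x ⟨p, q, hp, hq, hpq, rfl⟩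
    obtain rfl : q = 1 - p := by linarith
    rw [hflat (i + 1) (by omega) hi]
    simp only [inner_add_right, inner_smul_right, ha (i + 1) hi]
    refine ⟨by nlinarith, fun h => ?_⟩
    have h0 : p * s = 0 := by
      have : p * s * ‖v (i + 1) - v i‖ = 0 := by rw [hfi] at h; linarith
      exact (mul_eq_zero.1 this).resolve_right (hpos i hi).ne'
    have hc1 : c ≤ 1 := by nlinarith
    refine ⟨p * c, 1 - p * c, by positivity, by nlinarith, by ring, ?_⟩
    have h1 : p * (s * ‖v (i + 1) - v i‖) = 0 := by rw [← mul_assoc, h0, zero_mul]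
    rw [hrot, smul_add, smul_add, smul_smul p (s * _) e, h1]
    module
  have hflat_edge : ∀ k x, i < k → k < n → x ∈ segment ℝ (w k) (w (k + 1)) →
      x ∈ segment ℝ (v k) (v (k + 1)) := by
    intro k x hik hk hx
    rwa [hflat k hik hk.le, hflat (k + 1) (by omega) hk] at hx
  have hheight : ∀ k x, k < n → x ∈ segment ℝ (v k) (v (k + 1)) → inner ℝ e x = a := by
    rintro k x hk ⟨p, q, hp, hq, hpq, rfl⟩
    simp only [inner_add_right, inner_smul_right, ha k hk.le, ha (k + 1) hk]
    rw [← add_mul, hpq, one_mul]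
  have horig : ∀ j k x, j < k → k < n → x ∈ segment ℝ (v j) (v (j + 1)) →
      x ∈ segment ℝ (v k) (v (k + 1)) → j + 1 = k ∧ x = v k := by
    intro j k x hjk hk h1 h2
    have hx : x ∈ segment ℝ (v j) (v (j + 1)) ∩ segment ℝ (v k) (v (k + 1)) := ⟨h1, h2⟩
    rw [hint j k hjk hk] at hx
    split_ifs at hx with h
    · exact ⟨h, hx⟩
    · exact hx.elim
  refine isSimpleOpenChain_of_edges hn hne fun j k x hjk hk hxj hxk => ?_
  rcases Nat.lt_or_ge i k with hik | hki
  · have hxk' := hflat_edge k x hik hk hxk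
    have hxa := hheight k x hk hxk'
    rw [hflat k hik hk.le]
    rcases lt_trichotomy j i with hji | rfl | hij
    · obtain ⟨h1, -, h2⟩ := hedge_vert j x hji hxj
      have h3 := hle (j + 1) i hji le_rfl
      have hai : inner ℝ e (w i) = a := by linarith
      have hxi : x = w i := by rw [h2, hxa, hai]; simp
      have hs0 : s = 0 := by
        have : s * ‖v (i + 1) - v i‖ = 0 := by linarith
        exact (mul_eq_zero.1 this).resolve_right (hpos i hi).ne'
      have hc1 : c = 1 := by
        rw [hs0] at hcs; nlinarith
      have hwv : w i = v i := by rw [hrot, hs0, hc1]; module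
      rw [hxi, hwv] at hxk'
      have h4 := (horig i k (v i) hik hk (left_mem_segment ℝ _ _) hxk').2
      exact absurd h4 (hinj i k (by omega) (by omega) (by omega))
    · exact horig j k x hjk hk ((hedge_rot x hxj).2 hxa) hxk'
    · exact horig j k x hjk hk (hflat_edge j x hij (by omega) hxj) hxk'
  · obtain ⟨h1, -, h2⟩ := hedge_vert j x (by omega) hxj
    have h3 : inner ℝ e x ≤ inner ℝ e (w k) := by
      rcases hki.lt_or_eq with h | rfl
      · exact (hedge_vert k x h hxk).2.1
      · exact (hedge_rot x hxk).1
    have h4 := hle (j + 1) k hjk hki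
    have h5 : inner ℝ e x = inner ℝ e (w k) := by linarith
    refine ⟨?_, ?_⟩
    · by_contra hne'
      have := hlt (j + 1) k (by omega) hki
      linarith
    · rw [h2, h5]
      exact (hstrand (i - k) k (by omega)).symm

/-- The angle of elevation of the edge `k` of an `n`-edge chain at time `t`: the edges are raised
from `0` to `π / 2` one after the other. -/
def liftAngle (n : ℕ) (t : ℝ) (k : ℕ) : ℝ :=
  Real.pi / 2 * max 0 (min 1 (n * t - k))

/-- The motion that raises the edges of `v 0, …, v n` one after the other into the direction `e`,
each one about its end, keeping `v n` fixed. -/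
def liftMotion (n : ℕ) (v : ℕ → E3) (e : E3) (t : ℝ) (j : ℕ) : E3 :=
  v n + ∑ k ∈ Finset.Ico j n, (Real.cos (liftAngle n t k) • (v k - v (k + 1)) +
    (Real.sin (liftAngle n t k) * ‖v (k + 1) - v k‖) • e)

lemma liftMotion_self (n : ℕ) (v : ℕ → E3) (e : E3) (t : ℝ) : liftMotion n v e t n = v n := by
  simp [liftMotion]

lemma liftMotion_succ {n : ℕ} (v : ℕ → E3) (e : E3) (t : ℝ) {j : ℕ} (hj : j < n) :
    liftMotion n v e t j = liftMotion n v e t (j + 1) +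
      (Real.cos (liftAngle n t j) • (v j - v (j + 1)) +
        (Real.sin (liftAngle n t j) * ‖v (j + 1) - v j‖) • e) := by
  rw [liftMotion, Finset.sum_eq_sum_Ico_succ_bot hj, liftMotion]
  abel

lemma liftAngle_of_add_one_le {n k : ℕ} {t : ℝ} (h : (k : ℝ) + 1 ≤ n * t) :
    liftAngle n t k = Real.pi / 2 := by
  rw [liftAngle, min_eq_left (by linarith), max_eq_right zero_le_one, mul_one]

lemma liftAngle_of_le {n k : ℕ} {t : ℝ} (h : (n : ℝ) * t ≤ k) : liftAngle n t k = 0 := by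
  rw [liftAngle, max_eq_left ((min_le_right _ _).trans (by linarith)), mul_zero]

lemma liftAngle_mem_Icc (n k : ℕ) (t : ℝ) : liftAngle n t k ∈ Set.Icc 0 (Real.pi / 2) := by
  have h0 : 0 ≤ max 0 (min 1 ((n : ℝ) * t - k)) := le_max_left _ _
  have h1 : max 0 (min 1 ((n : ℝ) * t - k)) ≤ 1 := max_le zero_le_one (min_le_left _ _)
  have := Real.pi_pos
  constructor <;> rw [liftAngle] <;> nlinarith

lemma liftMotion_eq_of_angle_eq_zero {n : ℕ} (v : ℕ → E3) (e : E3) {t : ℝ} {j : ℕ} (hj : j ≤ n)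
    (h : ∀ k, j ≤ k → k < n → liftAngle n t k = 0) : liftMotion n v e t j = v j := by
  induction hj using Nat.decreasingInduction with
  | self => exact liftMotion_self n v e t
  | of_succ j hj ih =>
    rw [liftMotion_succ v e t hj, ih fun k hk => h k (by omega), h j le_rfl hj]
    simp

lemma continuous_liftMotion (n : ℕ) (v : ℕ → E3) (e : E3) (j : ℕ) :
    Continuous fun t => liftMotion n v e t j := by
  unfold liftMotion liftAngle
  fun_prop

lemma norm_liftMotion_sub {n : ℕ} (v : ℕ → E3) {e : E3} (he : ‖e‖ = 1) (t : ℝ) {j : ℕ}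
    (hj : j < n) (hperp : inner ℝ (v j - v (j + 1)) e = 0) :
    ‖liftMotion n v e t (j + 1) - liftMotion n v e t j‖ = ‖v (j + 1) - v j‖ := by
  rw [norm_sub_rev, liftMotion_succ v e t hj, add_sub_cancel_left,
    ← sq_eq_sq₀ (norm_nonneg _) (norm_nonneg _), sq,
    norm_add_sq_eq_norm_sq_add_norm_sq_of_inner_eq_zero _ _
      (by rw [inner_smul_left, inner_smul_right, hperp]; simp)]
  rw [norm_smul, norm_smul, he, norm_mul, norm_norm, norm_sub_rev (v j), mul_one,
    Real.norm_eq_abs, Real.norm_eq_abs]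
  have h := Real.cos_sq_add_sin_sq (liftAngle n t j)
  rw [← sq_abs, ← sq_abs (Real.sin _)] at h
  linear_combination ‖v (j + 1) - v j‖ ^ 2 * h

lemma isSimpleOpenChain_liftMotion {n : ℕ} {v : ℕ → E3} (hv : IsSimpleOpenChain n v) {e : E3}
    (he : ‖e‖ = 1) {a : ℝ} (ha : ∀ k, k ≤ n → inner ℝ e (v k) = a) {t : ℝ}
    (ht : t ∈ Set.Icc (0 : ℝ) 1) : IsSimpleOpenChain n (liftMotion n v e t) := by
  have hn := hv.1
  obtain ⟨i, hi, hbefore, hafter⟩ : ∃ i, i < n ∧ (∀ k, k < i → liftAngle n t k = Real.pi / 2) ∧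
      ∀ k, i < k → k < n → liftAngle n t k = 0 := by
    have hnt : 0 ≤ (n : ℝ) * t := mul_nonneg n.cast_nonneg ht.1
    refine ⟨min ⌊(n : ℝ) * t⌋₊ (n - 1), by omega, fun k hk => ?_, fun k hk hkn => ?_⟩
    · apply liftAngle_of_add_one_le
      have h : k + 1 ≤ ⌊(n : ℝ) * t⌋₊ := by omega
      exact_mod_cast (Nat.le_floor_iff hnt).1 h
    · apply liftAngle_of_le
      exact ((Nat.floor_lt hnt).1 (by omega)).le
  have hangle := liftAngle_mem_Icc n i t
  have hpi := Real.pi_pos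
  refine hv.lifted he ha hi
    (Real.cos_nonneg_of_mem_Icc ⟨by linarith [hangle.1], hangle.2⟩)
    (Real.sin_nonneg_of_mem_Icc ⟨hangle.1, by linarith [hangle.2]⟩)
    (Real.cos_sq_add_sin_sq _) ?_ ?_ ?_ ?_
  · intro k hk h
    have hperp : inner ℝ (v k - v (k + 1)) e = 0 := by
      rw [real_inner_comm, inner_sub_right, ha k hk.le, ha (k + 1) hk, sub_self]
    have hnorm := norm_liftMotion_sub v he t hk hperp
    rw [h, sub_self, norm_zero, eq_comm, norm_eq_zero, sub_eq_zero] at hnorm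
    exact hv.2.1 _ _ hk hk.le (by omega) hnorm
  · exact fun k hik hk => liftMotion_eq_of_angle_eq_zero v e hk
      fun l hl => hafter l (by omega)
  · rw [liftMotion_succ v e t hi, liftMotion_eq_of_angle_eq_zero v e hi
      fun l hl => hafter l (by omega)]
  · intro k hk
    rw [liftMotion_succ v e t (by omega), hbefore k hk]
    simp

lemma isStraightening_liftMotion_one (n : ℕ) (v : ℕ → E3) {e : E3} (he : ‖e‖ = 1) :
    IsStraightening n v (liftMotion n v e 1) := by
  refine ⟨v n + (∑ k ∈ Finset.range n, ‖v (k + 1) - v k‖) • e, -e, by rw [norm_neg, he],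
    fun i hi => ?_⟩
  have hsum : liftMotion n v e 1 i = v n + (∑ k ∈ Finset.Ico i n, ‖v (k + 1) - v k‖) • e := by
    rw [liftMotion, Finset.sum_smul]
    congr 1
    refine Finset.sum_congr rfl fun k hk => ?_
    have hk' : (k : ℝ) + 1 ≤ n * 1 := by
      rw [mul_one]; exact_mod_cast (Finset.mem_Ico.1 hk).2
    rw [liftAngle_of_add_one_le hk']
    simp
  rw [hsum, ← Finset.sum_range_add_sum_Ico _ hi]
  module

lemma AffineSubspace.exists_unit_normal {S : AffineSubspace ℝ E3}
    (hS : Module.finrank ℝ S.direction = 2) :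
    ∃ e : E3, ‖e‖ = 1 ∧ ∀ x ∈ S, ∀ y ∈ S, inner ℝ e x = (inner ℝ e y : ℝ) := by
  have hrank := S.direction.finrank_add_finrank_orthogonal
  rw [hS, finrank_euclideanSpace_fin] at hrank
  have hbot : S.directionᗮ ≠ ⊥ := fun h => by
    rw [h, finrank_bot] at hrank
    omega
  obtain ⟨z, hz, hz0⟩ := Submodule.exists_mem_ne_zero_of_ne_bot hbot
  refine ⟨‖z‖⁻¹ • z, norm_smul_inv_norm hz0, fun x hx y hy => ?_⟩
  have h := Submodule.inner_left_of_mem_orthogonal (S.vsub_mem_direction hx hy) hz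
  rw [vsub_eq_sub, inner_sub_right, sub_eq_zero] at h
  rw [inner_smul_left, inner_smul_left, h]

/-- A simple open polygonal chain contained in a plane of ℝ³
(a 2-dimensional affine subspace containing all vertices) can be straightened
by a motion in ℝ³. -/
theorem straightenable_of_planar (n : ℕ) (v : ℕ → E3)
    (hsimple : IsSimpleOpenChain n v)
    (S : AffineSubspace ℝ E3) (hS : Module.finrank ℝ S.direction = 2)
    (hplanar : ∀ i, i ≤ n → v i ∈ S) :
    CanBeStraightened n v := by
  obtain ⟨e, he, hperp⟩ := AffineSubspace.exists_unit_normal hS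
  have ha : ∀ k, k ≤ n → inner ℝ e (v k) = (inner ℝ e (v 0) : ℝ) := fun k hk =>
    hperp _ (hplanar k hk) _ (hplanar 0 n.zero_le)
  refine ⟨liftMotion n v e, ⟨fun i _ => (continuous_liftMotion n v e i).continuousOn, ?_,
    fun t ht => isSimpleOpenChain_liftMotion hsimple he ha ht, ?_⟩,
    isStraightening_liftMotion_one n v he⟩
  · exact fun i hi => liftMotion_eq_of_angle_eq_zero v e hi fun k _ _ =>
      liftAngle_of_le (by simp)
  · intro t _ i hi
    refine norm_liftMotion_sub v he t hi ?_
    rw [real_inner_comm, inner_sub_right, ha i hi.le, ha (i + 1) hi, sub_self]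
end
end

section
/- There exists a locked simple open polygonal chain in ℝ³ with 5 edges (6 vertices), i.e., a simple open polygonal chain that cannot be straightened by any motion. -/
noncomputable section

open Filter Topology
open scoped Matrix

/-- A chain of five edges whose non-consecutive edges are disjoint and whose two end edges are
both longer than the three middle edges together. -/
structure IsNeedleChain (v : ℕ → E3) : Prop where
  disjoint_edges : ∀ i j, i + 1 < j → j < 5 →
    Disjoint (segment ℝ (v i) (v (i + 1))) (segment ℝ (v j) (v (j + 1)))
  middle_lt_first : ‖v 2 - v 1‖ + ‖v 3 - v 2‖ + ‖v 4 - v 3‖ < ‖v 1 - v 0‖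
  middle_lt_last : ‖v 2 - v 1‖ + ‖v 3 - v 2‖ + ‖v 4 - v 3‖ < ‖v 5 - v 4‖

/-- The end edges enter the tetrahedron spanned by `v 1, v 2, v 3, v 4` and contain points of it
which differ by a nonnegative multiple of `v 2 - v 3`. The numbers `x₁, x₂, x₃, x₄` are
barycentric coordinates of the point on `[v 0, v 1]`, the number `d` is the multiple, and `s`, `t`
are the positions of the two points on the end edges. -/
structure IsEntangled (v : ℕ → E3) (x₁ x₂ x₃ x₄ d s t : ℝ) : Prop where
  x₁_nonneg : 0 ≤ x₁
  x₂_nonneg : 0 ≤ x₂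
  d_le : d ≤ x₃
  x₄_nonneg : 0 ≤ x₄
  d_nonneg : 0 ≤ d
  sum_eq : x₁ + x₂ + x₃ + x₄ = 1
  s_nonneg : 0 ≤ s
  s_le : s ≤ 1
  t_nonneg : 0 ≤ t
  t_le : t ≤ 1
  first_eq : v 1 + s • (v 0 - v 1) = x₁ • v 1 + x₂ • v 2 + x₃ • v 3 + x₄ • v 4
  last_eq : v 4 + t • (v 5 - v 4) = x₁ • v 1 + (x₂ + d) • v 2 + (x₃ - d) • v 3 + x₄ • v 4

theorem IsNeedleChain.reverse {v : ℕ → E3} (h : IsNeedleChain v) :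
    IsNeedleChain fun i => v (5 - i) where
  disjoint_edges i j hij hj := by
    have key := h.disjoint_edges (5 - (j + 1)) (5 - (i + 1)) (by omega) (by omega)
    rw [show 5 - (j + 1) + 1 = 5 - j by omega, show 5 - (i + 1) + 1 = 5 - i by omega] at key
    rw [segment_symm ℝ (v (5 - i)), segment_symm ℝ (v (5 - j))]
    exact key.symm
  middle_lt_first := by
    have := h.middle_lt_last
    simp only [Nat.reduceSub]
    rw [norm_sub_rev (v 3) (v 4), norm_sub_rev (v 2) (v 3), norm_sub_rev (v 1) (v 2),
      norm_sub_rev (v 4) (v 5)]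
    linarith
  middle_lt_last := by
    have := h.middle_lt_first
    simp only [Nat.reduceSub]
    rw [norm_sub_rev (v 3) (v 4), norm_sub_rev (v 2) (v 3), norm_sub_rev (v 1) (v 2),
      norm_sub_rev (v 0) (v 1)]
    linarith

theorem IsEntangled.reverse {v : ℕ → E3} {x₁ x₂ x₃ x₄ d s t : ℝ}
    (h : IsEntangled v x₁ x₂ x₃ x₄ d s t) :
    IsEntangled (fun i => v (5 - i)) x₄ (x₃ - d) (x₂ + d) x₁ d t s where
  x₁_nonneg := h.x₄_nonneg
  x₂_nonneg := sub_nonneg.2 h.d_le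
  d_le := by linarith [h.x₂_nonneg]
  x₄_nonneg := h.x₁_nonneg
  d_nonneg := h.d_nonneg
  sum_eq := by linarith [h.sum_eq]
  s_nonneg := h.t_nonneg
  s_le := h.t_le
  t_nonneg := h.s_nonneg
  t_le := h.s_le
  first_eq := by
    have := h.last_eq
    simp only [Nat.reduceSub]
    rw [this]
    module
  last_eq := by
    have := h.first_eq
    simp only [Nat.reduceSub]
    rw [this]
    module

theorem norm_sub_le_middle {v : ℕ → E3} {j : ℕ} (hj₁ : 1 ≤ j) (hj₄ : j ≤ 4) :
    ‖v j - v 1‖ ≤ ‖v 2 - v 1‖ + ‖v 3 - v 2‖ + ‖v 4 - v 3‖ := by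
  have hp₂ := norm_nonneg (v 2 - v 1)
  have hp₃ := norm_nonneg (v 3 - v 2)
  have hp₄ := norm_nonneg (v 4 - v 3)
  have h₃ := norm_sub_le_norm_sub_add_norm_sub (v 3) (v 2) (v 1)
  have h₄ := norm_sub_le_norm_sub_add_norm_sub (v 4) (v 3) (v 1)
  interval_cases j
  · rw [sub_self, norm_zero]
    positivity
  all_goals linarith

/-- The ray from `v 1` through `v 0` meets neither `[v 2, v 3]` nor `[v 3, v 4]`. -/
theorem IsNeedleChain.first_ray_notMem {v : ℕ → E3} (h : IsNeedleChain v) {c : ℝ} (hc : 0 ≤ c)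
    {j : ℕ} (hj : j = 2 ∨ j = 3) :
    v 1 + c • (v 0 - v 1) ∉ segment ℝ (v j) (v (j + 1)) := by
  intro hmem
  have hlt := h.middle_lt_first
  have hsub : segment ℝ (v j) (v (j + 1)) ⊆
      Metric.closedBall (v 1) (‖v 2 - v 1‖ + ‖v 3 - v 2‖ + ‖v 4 - v 3‖) := by
    refine (convex_closedBall _ _).segment_subset ?_ ?_ <;> rw [mem_closedBall_iff_norm]
    · exact norm_sub_le_middle (by omega) (by omega)
    · exact norm_sub_le_middle (by omega) (by omega)
  have hball := hsub hmem
  rw [mem_closedBall_iff_norm, add_sub_cancel_left, norm_smul, Real.norm_of_nonneg hc,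
    norm_sub_rev] at hball
  have hc₁ : c ≤ 1 := by
    by_contra! hc₁
    nlinarith [norm_nonneg (v 1 - v 0)]
  refine Set.disjoint_left.1 (h.disjoint_edges 0 j (by omega) (by omega)) ?_ hmem
  exact ⟨c, 1 - c, hc, by linarith, by ring, by simp only [zero_add]; module⟩

/-- The ray from `v 4` through `v 5` does not meet `[v 1, v 2]`. -/
theorem IsNeedleChain.last_ray_notMem {v : ℕ → E3} (h : IsNeedleChain v) {c : ℝ} (hc : 0 ≤ c) :
    v 4 + c • (v 5 - v 4) ∉ segment ℝ (v 1) (v 2) := by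
  have := h.reverse.first_ray_notMem hc (Or.inr rfl)
  simp only [Nat.reduceSub, Nat.reduceAdd] at this
  rwa [segment_symm]

theorem IsEntangled.first_mem {v : ℕ → E3} {x₁ x₂ x₃ x₄ d s t : ℝ}
    (h : IsEntangled v x₁ x₂ x₃ x₄ d s t) : v 1 + s • (v 0 - v 1) ∈ segment ℝ (v 0) (v 1) :=
  ⟨s, 1 - s, h.s_nonneg, by linarith [h.s_le], by ring, by module⟩

theorem IsEntangled.last_mem {v : ℕ → E3} {x₁ x₂ x₃ x₄ d s t : ℝ}
    (h : IsEntangled v x₁ x₂ x₃ x₄ d s t) : v 4 + t • (v 5 - v 4) ∈ segment ℝ (v 4) (v 5) :=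
  ⟨1 - t, t, by linarith [h.t_le], h.t_nonneg, by ring, by module⟩

theorem IsEntangled.d_pos {v : ℕ → E3} {x₁ x₂ x₃ x₄ d s t : ℝ}
    (h : IsEntangled v x₁ x₂ x₃ x₄ d s t) (hv : IsNeedleChain v) : 0 < d := by
  refine lt_of_le_of_ne h.d_nonneg ?_
  rintro rfl
  refine Set.disjoint_left.1 (hv.disjoint_edges 0 4 (by omega) (by omega)) h.first_mem ?_
  have : v 1 + s • (v 0 - v 1) = v 4 + t • (v 5 - v 4) := by
    rw [h.first_eq, h.last_eq]
    module
  rw [this]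
  exact h.last_mem

theorem IsEntangled.x₄_pos {v : ℕ → E3} {x₁ x₂ x₃ x₄ d s t : ℝ}
    (h : IsEntangled v x₁ x₂ x₃ x₄ d s t) (hv : IsNeedleChain v) : 0 < x₄ := by
  have hd := h.d_pos hv
  have hd₃ := h.d_le
  have hsum := h.sum_eq
  have h₁ := h.x₁_nonneg
  have h₂ := h.x₂_nonneg
  refine lt_of_le_of_ne h.x₄_nonneg ?_
  rintro rfl
  have hpos : 0 < 1 - x₁ := by linarith
  refine hv.first_ray_notMem (c := s / (1 - x₁)) (div_nonneg h.s_nonneg hpos.le) (Or.inl rfl) ?_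
  refine ⟨x₂ / (1 - x₁), x₃ / (1 - x₁), by positivity, div_nonneg (by linarith) hpos.le,
    by rw [← add_div, div_eq_one_iff_eq hpos.ne']; linarith, ?_⟩
  have key : s • (v 0 - v 1) = x₂ • v 2 + x₃ • v 3 - (1 - x₁) • v 1 := by
    linear_combination (norm := module) h.first_eq
  rw [div_eq_inv_mul, div_eq_inv_mul, div_eq_inv_mul, mul_smul _ s, key, smul_sub,
    inv_smul_smul₀ hpos.ne']
  module

theorem IsEntangled.x₂_pos {v : ℕ → E3} {x₁ x₂ x₃ x₄ d s t : ℝ}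
    (h : IsEntangled v x₁ x₂ x₃ x₄ d s t) (hv : IsNeedleChain v) : 0 < x₂ := by
  have hd := h.d_pos hv
  have hd₃ := h.d_le
  have hsum := h.sum_eq
  have h₁ := h.x₁_nonneg
  have h₄ := h.x₄_nonneg
  refine lt_of_le_of_ne h.x₂_nonneg ?_
  rintro rfl
  have hpos : 0 < 1 - x₁ := by linarith
  refine hv.first_ray_notMem (c := s / (1 - x₁)) (div_nonneg h.s_nonneg hpos.le) (Or.inr rfl) ?_
  refine ⟨x₃ / (1 - x₁), x₄ / (1 - x₁), div_nonneg (by linarith) hpos.le, by positivity,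
    by rw [← add_div, div_eq_one_iff_eq hpos.ne']; linarith, ?_⟩
  have key : s • (v 0 - v 1) = x₃ • v 3 + x₄ • v 4 - (1 - x₁) • v 1 := by
    linear_combination (norm := module) h.first_eq
  rw [div_eq_inv_mul, div_eq_inv_mul, div_eq_inv_mul, mul_smul _ s, key, smul_sub,
    inv_smul_smul₀ hpos.ne']
  module

theorem IsEntangled.x₁_pos {v : ℕ → E3} {x₁ x₂ x₃ x₄ d s t : ℝ}
    (h : IsEntangled v x₁ x₂ x₃ x₄ d s t) (hv : IsNeedleChain v) : 0 < x₁ :=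
  h.reverse.x₄_pos hv.reverse

theorem IsEntangled.d_lt {v : ℕ → E3} {x₁ x₂ x₃ x₄ d s t : ℝ}
    (h : IsEntangled v x₁ x₂ x₃ x₄ d s t) (hv : IsNeedleChain v) : d < x₃ :=
  sub_pos.1 (h.reverse.x₂_pos hv.reverse)

theorem IsEntangled.s_pos {v : ℕ → E3} {x₁ x₂ x₃ x₄ d s t : ℝ}
    (h : IsEntangled v x₁ x₂ x₃ x₄ d s t) (hv : IsNeedleChain v) : 0 < s := by
  have hd := h.d_pos hv
  have hd₃ := h.d_lt hv
  have hsum := h.sum_eq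
  have h₁ := h.x₁_pos hv
  have h₂ := h.x₂_pos hv
  have h₄ := h.x₄_pos hv
  have ht := h.t_nonneg
  refine lt_of_le_of_ne h.s_nonneg ?_
  rintro rfl
  have hD : 0 < x₃ - x₄ * d := by nlinarith
  have hle : d * (x₂ + x₃) ≤ x₃ - x₄ * d := by nlinarith
  have hu : d * (x₂ + x₃) / (x₃ - x₄ * d) ≤ 1 := (div_le_one hD).2 hle
  have hu₀ : 0 ≤ d * (x₂ + x₃) / (x₃ - x₄ * d) := div_nonneg (by nlinarith) hD.le
  have hr₀ : 0 ≤ 1 + d * x₄ / (x₃ - x₄ * d) := by positivity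
  refine hv.last_ray_notMem (c := (1 + d * x₄ / (x₃ - x₄ * d)) * t) (by positivity) ?_
  refine ⟨1 - d * (x₂ + x₃) / (x₃ - x₄ * d), d * (x₂ + x₃) / (x₃ - x₄ * d), by linarith, hu₀,
    by ring, ?_⟩
  have e₁ : (1 - x₁) • v 1 = x₂ • v 2 + x₃ • v 3 + x₄ • v 4 := by
    linear_combination (norm := module) h.first_eq
  have e₂ : t • (v 5 - v 4) = v 1 + d • (v 2 - v 3) - v 4 := by
    linear_combination (norm := module) h.last_eq - h.first_eq
  rw [mul_smul, e₂]
  refine smul_right_injective E3 hD.ne' ?_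
  have f₁ : (x₃ - x₄ * d) * (d * (x₂ + x₃) / (x₃ - x₄ * d)) = d * (x₂ + x₃) := by field_simp
  have f₂ : (x₃ - x₄ * d) * (d * x₄ / (x₃ - x₄ * d)) = d * x₄ := by field_simp
  have hx₁ : x₁ = 1 - x₂ - x₃ - x₄ := by linarith
  subst hx₁
  generalize d * (x₂ + x₃) / (x₃ - x₄ * d) = u at f₁
  generalize d * x₄ / (x₃ - x₄ * d) = r at f₂
  have g₁ := congrArg (fun k => k • (v 2 - v 1)) f₁
  have g₂ := congrArg (fun k => k • (v 1 + d • (v 2 - v 3) - v 4)) f₂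
  linear_combination (norm := module) g₁ - g₂ - d • e₁

theorem IsEntangled.t_pos {v : ℕ → E3} {x₁ x₂ x₃ x₄ d s t : ℝ}
    (h : IsEntangled v x₁ x₂ x₃ x₄ d s t) (hv : IsNeedleChain v) : 0 < t :=
  h.reverse.s_pos hv.reverse

theorem IsEntangled.s_lt {v : ℕ → E3} {x₁ x₂ x₃ x₄ d s t : ℝ}
    (h : IsEntangled v x₁ x₂ x₃ x₄ d s t) (hv : IsNeedleChain v) : s < 1 := by
  have hlt := hv.middle_lt_first
  have hball := convex_closedBall (v 1) (‖v 2 - v 1‖ + ‖v 3 - v 2‖ + ‖v 4 - v 3‖)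
  have hmem : ∀ j, 1 ≤ j → j ≤ 4 →
      v j ∈ Metric.closedBall (v 1) (‖v 2 - v 1‖ + ‖v 3 - v 2‖ + ‖v 4 - v 3‖) :=
    fun j h₁ h₄ => mem_closedBall_iff_norm.2 (norm_sub_le_middle h₁ h₄)
  have hX := hball.sum_mem (t := Finset.univ) (w := ![x₁, x₂, x₃, x₄])
    (z := ![v 1, v 2, v 3, v 4])
    (by
      intro i _
      fin_cases i
      exacts [h.x₁_nonneg, h.x₂_nonneg, h.d_nonneg.trans h.d_le, h.x₄_nonneg])
    (by simp [Fin.sum_univ_four, h.sum_eq])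
    (by
      intro i _
      fin_cases i
      exacts [hmem 1 (by simp) (by simp), hmem 2 (by simp) (by simp),
        hmem 3 (by simp) (by simp), hmem 4 (by simp) (by simp)])
  simp only [Fin.sum_univ_four, Matrix.cons_val] at hX
  rw [← h.first_eq, mem_closedBall_iff_norm, add_sub_cancel_left, norm_smul,
    Real.norm_of_nonneg h.s_nonneg, norm_sub_rev] at hX
  by_contra! hs
  nlinarith [norm_nonneg (v 1 - v 0)]

theorem IsEntangled.t_lt {v : ℕ → E3} {x₁ x₂ x₃ x₄ d s t : ℝ}
    (h : IsEntangled v x₁ x₂ x₃ x₄ d s t) (hv : IsNeedleChain v) : t < 1 :=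
  h.reverse.s_lt hv.reverse

/-- Along an affine dependency of `v 1, v 2, v 3, v 4`, barycentric coordinates could be moved
until one of them vanishes. -/
theorem IsEntangled.coeff_nonneg {v : ℕ → E3} {x₁ x₂ x₃ x₄ d s t : ℝ}
    (h : IsEntangled v x₁ x₂ x₃ x₄ d s t) (hv : IsNeedleChain v) {c₁ c₂ c₃ c₄ : ℝ}
    (hsum : c₁ + c₂ + c₃ + c₄ = 0) (hc : c₁ • v 1 + c₂ • v 2 + c₃ • v 3 + c₄ • v 4 = 0) :
    0 ≤ min (min c₁ c₂) (min c₃ c₄) := by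
  by_contra! hneg
  let f : ℝ → ℝ := fun r =>
    min (min (x₁ + r * c₁) (x₂ + r * c₂)) (min (x₃ - d + r * c₃) (x₄ + r * c₄))
  have hf : Continuous f := by fun_prop
  have hf₀ : 0 < f 0 := by
    simp only [f, zero_mul, add_zero, lt_min_iff, sub_pos]
    exact ⟨⟨h.x₁_pos hv, h.x₂_pos hv⟩, h.d_lt hv, h.x₄_pos hv⟩
  obtain ⟨R, hR₀, hR⟩ : ∃ R, 0 ≤ R ∧ f R ≤ 0 := by
    have aux : ∀ x c : ℝ, 0 ≤ x → c < 0 → 0 ≤ x / (-c) ∧ x + x / (-c) * c ≤ 0 := by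
      intro x c hx hc
      refine ⟨div_nonneg hx (by linarith), le_of_eq ?_⟩
      have := hc.ne
      field_simp
      ring
    simp only [min_lt_iff] at hneg
    simp only [f, min_le_iff]
    rcases hneg with (hn | hn) | (hn | hn)
    · exact ⟨_, (aux x₁ c₁ h.x₁_nonneg hn).1, Or.inl (Or.inl (aux x₁ c₁ h.x₁_nonneg hn).2)⟩
    · exact ⟨_, (aux x₂ c₂ h.x₂_nonneg hn).1, Or.inl (Or.inr (aux x₂ c₂ h.x₂_nonneg hn).2)⟩
    · have := sub_nonneg.2 h.d_le
      exact ⟨_, (aux _ c₃ this hn).1, Or.inr (Or.inl (aux _ c₃ this hn).2)⟩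
    · exact ⟨_, (aux x₄ c₄ h.x₄_nonneg hn).1, Or.inr (Or.inr (aux x₄ c₄ h.x₄_nonneg hn).2)⟩
  obtain ⟨r, -, hr⟩ := intermediate_value_Icc' hR₀ hf.continuousOn ⟨hR, hf₀.le⟩
  have hall : 0 ≤ f r := hr.ge
  simp only [f, le_min_iff] at hall
  have hmoved : IsEntangled v (x₁ + r * c₁) (x₂ + r * c₂) (x₃ + r * c₃) (x₄ + r * c₄) d s t :=
    { x₁_nonneg := hall.1.1
      x₂_nonneg := hall.1.2
      d_le := by linarith [hall.2.1]
      x₄_nonneg := hall.2.2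
      d_nonneg := h.d_nonneg
      sum_eq := by linear_combination h.sum_eq + r * hsum
      s_nonneg := h.s_nonneg
      s_le := h.s_le
      t_nonneg := h.t_nonneg
      t_le := h.t_le
      first_eq := by linear_combination (norm := module) h.first_eq - r • hc
      last_eq := by linear_combination (norm := module) h.last_eq - r • hc }
  have hpos : 0 < f r := by
    simp only [f, lt_min_iff]
    exact ⟨⟨hmoved.x₁_pos hv, hmoved.x₂_pos hv⟩, by linarith [hmoved.d_lt hv], hmoved.x₄_pos hv⟩
  exact hpos.ne' hr

theorem IsEntangled.linearIndependent_middle {v : ℕ → E3} {x₁ x₂ x₃ x₄ d s t : ℝ}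
    (h : IsEntangled v x₁ x₂ x₃ x₄ d s t) (hv : IsNeedleChain v) :
    LinearIndependent ℝ ![v 2 - v 1, v 3 - v 1, v 4 - v 1] := by
  rw [Fintype.linearIndependent_iff]
  intro g hg
  simp only [Fin.sum_univ_three, Matrix.cons_val] at hg
  have hnonneg := h.coeff_nonneg hv (c₁ := -(g 0 + g 1 + g 2)) (c₂ := g 0) (c₃ := g 1)
    (c₄ := g 2) (by ring) (by linear_combination (norm := module) hg)
  simp only [le_min_iff] at hnonneg
  intro i
  fin_cases i <;> simp only [Fin.zero_eta, Fin.mk_one, Fin.reduceFinMk] <;> linarith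

theorem IsEntangled.linearIndependent_ends {v : ℕ → E3} {x₁ x₂ x₃ x₄ d s t : ℝ}
    (h : IsEntangled v x₁ x₂ x₃ x₄ d s t) (hv : IsNeedleChain v) :
    LinearIndependent ℝ ![v 0 - v 1, v 5 - v 4, v 2 - v 3] := by
  have hmid := Fintype.linearIndependent_iff.1 (h.linearIndependent_middle hv)
  have hs := h.s_pos hv
  have ht := h.t_pos hv
  have h₂₃ : 0 < x₂ + x₃ := by linarith [h.x₂_pos hv, h.d_lt hv, h.d_pos hv]
  rw [Fintype.linearIndependent_iff]
  intro g hg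
  simp only [Fin.sum_univ_three, Matrix.cons_val] at hg
  obtain ⟨p, hp⟩ : ∃ p, g 0 = p * s := ⟨g 0 / s, by field_simp⟩
  obtain ⟨q, hq⟩ : ∃ q, g 1 = q * t := ⟨g 1 / t, by field_simp⟩
  have hx₁ : x₁ = 1 - x₂ - x₃ - x₄ := by linarith [h.sum_eq]
  have e₁ := h.first_eq
  have e₂ := h.last_eq
  rw [hp, hq] at hg
  subst hx₁
  have key := hmid ![p * x₂ + q * (x₂ + d) + g 2, p * x₃ + q * (x₃ - d) - g 2,
    p * x₄ + q * (x₄ - 1)] (by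
      simp only [Fin.sum_univ_three, Matrix.cons_val]
      linear_combination (norm := module) hg - p • e₁ - q • e₂)
  have k₀ := key 0
  have k₁ := key 1
  have k₂ := key 2
  simp only [Matrix.cons_val] at k₀ k₁ k₂
  have hpq : p + q = 0 := by
    have : (p + q) * (x₂ + x₃) = 0 := by linear_combination k₀ + k₁
    exact (mul_eq_zero.1 this).resolve_right h₂₃.ne'
  have hq₀ : q = 0 := by linear_combination x₄ * hpq - k₂
  have hp₀ : p = 0 := by linarith
  subst hq₀ hp₀
  intro i
  fin_cases i <;> simp only [Fin.zero_eta, Fin.mk_one, Fin.reduceFinMk] <;> linarith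

/-- Coordinates with respect to a continuously varying basis vary continuously. -/
theorem exists_continuousAt_coordinates {T : Type*} [TopologicalSpace T] {t₀ : T}
    {u : Fin 3 → T → E3} {w : T → E3} (hu : ∀ i, ContinuousAt (u i) t₀) (hw : ContinuousAt w t₀)
    (hli : LinearIndependent ℝ fun i => u i t₀) {c₀ : Fin 3 → ℝ}
    (hc₀ : ∑ i, c₀ i • u i t₀ = w t₀) :
    ∃ c : Fin 3 → T → ℝ, (∀ i, ContinuousAt (c i) t₀) ∧ (∀ i, c i t₀ = c₀ i) ∧
      ∀ᶠ t in 𝓝 t₀, ∑ i, c i t • u i t = w t := by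
  let M : T → Matrix (Fin 3) (Fin 3) ℝ := fun t => Matrix.of fun i j => u j t i
  have hM : ContinuousAt M t₀ := by
    refine continuousAt_pi.2 fun i => continuousAt_pi.2 fun j => ?_
    exact ContinuousAt.comp (g := fun x : E3 => x i) (by fun_prop) (hu j)
  have hw' : ContinuousAt (fun t => (w t).ofLp) t₀ :=
    ContinuousAt.comp (g := fun x : E3 => x.ofLp) (by fun_prop) hw
  have hmul : ∀ t (c : Fin 3 → ℝ), M t *ᵥ c = (∑ i, c i • u i t).ofLp := by
    intro t c
    ext i
    simp [M, Matrix.mulVec, dotProduct, mul_comm]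
  have hdet : (M t₀).det ≠ 0 := by
    intro h0
    obtain ⟨c, hc, hc0⟩ := Matrix.exists_mulVec_eq_zero_iff.2 h0
    rw [hmul] at hc0
    refine hc (funext (Fintype.linearIndependent_iff.1 hli c ?_))
    exact WithLp.ofLp_injective 2 hc0
  have hdetc : ContinuousAt (fun t => (M t).det) t₀ :=
    ContinuousAt.comp (g := Matrix.det) (Continuous.matrix_det continuous_id).continuousAt hM
  have hadj : ContinuousAt (fun t => (M t).adjugate) t₀ :=
    ContinuousAt.comp (g := Matrix.adjugate) (Continuous.matrix_adjugate continuous_id).continuousAt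
      hM
  have hunit : ∀ᶠ t in 𝓝 t₀, IsUnit (M t).det :=
    (hdetc.eventually_ne hdet).mono fun t ht => isUnit_iff_ne_zero.2 ht
  refine ⟨fun i t => ((M t).det)⁻¹ * ((M t).adjugate *ᵥ (w t).ofLp) i, fun i => ?_, fun i => ?_, ?_⟩
  · refine (hdetc.inv₀ hdet).mul ?_
    have : ContinuousAt (fun t => (M t).adjugate *ᵥ (w t).ofLp) t₀ :=
      ContinuousAt.comp (g := fun p : Matrix (Fin 3) (Fin 3) ℝ × (Fin 3 → ℝ) => p.1 *ᵥ p.2)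
        (by fun_prop) (hadj.prodMk hw')
    exact continuousAt_pi.1 this i
  · beta_reduce
    rw [← hc₀, ← hmul, Matrix.mulVec_mulVec, Matrix.adjugate_mul, Matrix.smul_mulVec,
      Matrix.one_mulVec, Pi.smul_apply, smul_eq_mul, inv_mul_cancel_left₀ hdet]
  · filter_upwards [hunit] with t ht
    refine WithLp.ofLp_injective 2 ?_
    rw [← hmul]
    change M t *ᵥ (((M t).det)⁻¹ • ((M t).adjugate *ᵥ (w t).ofLp)) = _
    rw [Matrix.mulVec_smul, Matrix.mulVec_mulVec, Matrix.mul_adjugate, Matrix.smul_mulVec,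
      Matrix.one_mulVec, inv_smul_smul₀ ht.ne_zero]

theorem isOpen_entangled {T : Type*} [TopologicalSpace T] {γ : T → ℕ → E3}
    (hγ : ∀ i ≤ 5, Continuous fun τ => γ τ i) (hchain : ∀ τ, IsNeedleChain (γ τ)) :
    IsOpen {τ | ∃ x₁ x₂ x₃ x₄ d s t, IsEntangled (γ τ) x₁ x₂ x₃ x₄ d s t} := by
  rw [isOpen_iff_mem_nhds]
  rintro τ₀ ⟨x₁, x₂, x₃, x₄, d, s, t, h⟩
  have hv := hchain τ₀
  have hdiff : ∀ i j, i ≤ 5 → j ≤ 5 → ContinuousAt (fun τ => γ τ i - γ τ j) τ₀ :=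
    fun i j hi hj => ((hγ i hi).sub (hγ j hj)).continuousAt
  obtain ⟨a, ha, ha₀, hea⟩ := exists_continuousAt_coordinates
    (u := ![fun τ => γ τ 0 - γ τ 1, fun τ => γ τ 5 - γ τ 4, fun τ => γ τ 2 - γ τ 3])
    (w := fun τ => γ τ 4 - γ τ 1) (t₀ := τ₀) (c₀ := ![s, -t, d])
    (by
      intro i
      fin_cases i
      exacts [hdiff 0 1 (by simp) (by simp), hdiff 5 4 (by simp) (by simp),
        hdiff 2 3 (by simp) (by simp)])
    (hdiff 4 1 (by simp) (by simp))
    (by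
      convert h.linearIndependent_ends hv using 1
      ext i : 1
      fin_cases i <;> rfl)
    (by
      simp only [Fin.sum_univ_three, Matrix.cons_val]
      linear_combination (norm := module) h.first_eq - h.last_eq)
  obtain ⟨b, hb, hb₀, heb⟩ := exists_continuousAt_coordinates
    (u := ![fun τ => γ τ 2 - γ τ 1, fun τ => γ τ 3 - γ τ 1, fun τ => γ τ 4 - γ τ 1])
    (w := fun τ => a 0 τ • (γ τ 0 - γ τ 1)) (t₀ := τ₀) (c₀ := ![x₂, x₃, x₄])
    (by
      intro i
      fin_cases i
      exacts [hdiff 2 1 (by simp) (by simp), hdiff 3 1 (by simp) (by simp),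
        hdiff 4 1 (by simp) (by simp)])
    ((ha 0).smul (hdiff 0 1 (by simp) (by simp)))
    (by
      convert h.linearIndependent_middle hv using 1
      ext i : 1
      fin_cases i <;> rfl)
    (by
      have hx₁ : x₁ = 1 - x₂ - x₃ - x₄ := by linarith [h.sum_eq]
      have e₁ := h.first_eq
      subst hx₁
      rw [ha₀]
      simp only [Fin.sum_univ_three, Matrix.cons_val]
      linear_combination (norm := module) -e₁)
  have gt : ∀ {f : T → ℝ} {y : ℝ}, ContinuousAt f τ₀ → f τ₀ = y → 0 < y → ∀ᶠ τ in 𝓝 τ₀, 0 < f τ :=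
    fun hf hy h0 => hf.eventually_const_lt (hy ▸ h0)
  have hx₁ := gt (f := fun τ => 1 - b 0 τ - b 1 τ - b 2 τ) (y := x₁)
    (((continuousAt_const.sub (hb 0)).sub (hb 1)).sub (hb 2))
    (by simp only [hb₀, Matrix.cons_val]; linarith [h.sum_eq]) (h.x₁_pos hv)
  have hx₂ := gt (hb 0) (hb₀ 0) (h.x₂_pos hv)
  have hx₃ := gt (f := fun τ => b 1 τ - a 2 τ) (y := x₃ - d) ((hb 1).sub (ha 2))
    (by simp only [hb₀, ha₀, Matrix.cons_val]) (sub_pos.2 (h.d_lt hv))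
  have hx₄ := gt (hb 2) (hb₀ 2) (h.x₄_pos hv)
  have hd := gt (ha 2) (ha₀ 2) (h.d_pos hv)
  have hs := gt (ha 0) (ha₀ 0) (h.s_pos hv)
  have ht := gt (f := fun τ => -a 1 τ) (y := t) (ha 1).neg (by simp [ha₀]) (h.t_pos hv)
  have hs' := gt (f := fun τ => 1 - a 0 τ) (y := 1 - s) (continuousAt_const.sub (ha 0))
    (by simp [ha₀]) (sub_pos.2 (h.s_lt hv))
  have ht' := gt (f := fun τ => 1 + a 1 τ) (y := 1 - t) (continuousAt_const.add (ha 1))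
    (by simp [ha₀, sub_eq_add_neg]) (sub_pos.2 (h.t_lt hv))
  filter_upwards [hx₁, hx₂, hx₃, hx₄, hd, hs, ht, hs', ht', hea, heb] with
    τ hx₁ hx₂ hx₃ hx₄ hd hs ht hs' ht' hea heb
  simp only [Fin.sum_univ_three, Matrix.cons_val] at hea heb
  exact ⟨1 - b 0 τ - b 1 τ - b 2 τ, b 0 τ, b 1 τ, b 2 τ, a 2 τ, a 0 τ, -a 1 τ,
    { x₁_nonneg := hx₁.le
      x₂_nonneg := hx₂.le
      d_le := (sub_pos.1 hx₃).le
      x₄_nonneg := hx₄.le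
      d_nonneg := hd.le
      sum_eq := by ring
      s_nonneg := hs.le
      s_le := by linarith
      t_nonneg := ht.le
      t_le := by linarith
      first_eq := by linear_combination (norm := module) -heb
      last_eq := by linear_combination (norm := module) -hea - heb }⟩

theorem isClosed_entangled {T : Type*} [TopologicalSpace T] {γ : T → ℕ → E3}
    (hγ : ∀ i ≤ 5, Continuous fun τ => γ τ i) :
    IsClosed {τ | ∃ x₁ x₂ x₃ x₄ d s t, IsEntangled (γ τ) x₁ x₂ x₃ x₄ d s t} := by
  have h₀ := hγ 0 (by simp)
  have h₁ := hγ 1 (by simp)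
  have h₂ := hγ 2 (by simp)
  have h₃ := hγ 3 (by simp)
  have h₄ := hγ 4 (by simp)
  have h₅ := hγ 5 (by simp)
  let S : Set (T × Set.Icc (0 : Fin 7 → ℝ) 1) := {p |
    IsEntangled (γ p.1) (p.2.1 0) (p.2.1 1) (p.2.1 2) (p.2.1 3) (p.2.1 4) (p.2.1 5) (p.2.1 6)}
  have hS : IsClosed S := by
    have hS_eq : S = {p | 0 ≤ p.2.1 0 ∧ 0 ≤ p.2.1 1 ∧ p.2.1 4 ≤ p.2.1 2 ∧ 0 ≤ p.2.1 3 ∧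
        0 ≤ p.2.1 4 ∧ p.2.1 0 + p.2.1 1 + p.2.1 2 + p.2.1 3 = 1 ∧ 0 ≤ p.2.1 5 ∧ p.2.1 5 ≤ 1 ∧
        0 ≤ p.2.1 6 ∧ p.2.1 6 ≤ 1 ∧
        γ p.1 1 + p.2.1 5 • (γ p.1 0 - γ p.1 1) =
          p.2.1 0 • γ p.1 1 + p.2.1 1 • γ p.1 2 + p.2.1 2 • γ p.1 3 + p.2.1 3 • γ p.1 4 ∧
        γ p.1 4 + p.2.1 6 • (γ p.1 5 - γ p.1 4) =
          p.2.1 0 • γ p.1 1 + (p.2.1 1 + p.2.1 4) • γ p.1 2 + (p.2.1 2 - p.2.1 4) • γ p.1 3 +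
            p.2.1 3 • γ p.1 4} :=
      Set.ext fun p => ⟨fun ⟨h₁, h₂, h₃, h₄, h₅, h₆, h₇, h₈, h₉, h₁₀, h₁₁, h₁₂⟩ =>
        ⟨h₁, h₂, h₃, h₄, h₅, h₆, h₇, h₈, h₉, h₁₀, h₁₁, h₁₂⟩,
        fun ⟨h₁, h₂, h₃, h₄, h₅, h₆, h₇, h₈, h₉, h₁₀, h₁₁, h₁₂⟩ =>
        ⟨h₁, h₂, h₃, h₄, h₅, h₆, h₇, h₈, h₉, h₁₀, h₁₁, h₁₂⟩⟩
    rw [hS_eq]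
    have hz : ∀ i, Continuous fun p : T × Set.Icc (0 : Fin 7 → ℝ) 1 => p.2.1 i := fun i =>
      (continuous_apply i).comp (continuous_subtype_val.comp continuous_snd)
    clear hγ
    simp only [Set.ofPred_and]
    repeat' apply IsClosed.inter
    all_goals first
      | exact isClosed_le (by fun_prop) (by fun_prop)
      | exact isClosed_eq (by fun_prop) (by fun_prop)
  convert isClosedMap_fst_of_compactSpace S hS using 1
  ext τ
  constructor
  · rintro ⟨x₁, x₂, x₃, x₄, d, s, t, h⟩
    have h₁ := h.x₁_nonneg
    have h₂ := h.x₂_nonneg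
    have h₃ := h.d_le
    have h₄ := h.x₄_nonneg
    have hd := h.d_nonneg
    have hsum := h.sum_eq
    refine ⟨(τ, ⟨![x₁, x₂, x₃, x₄, d, s, t], ?_, ?_⟩), h, rfl⟩
    · intro i
      fin_cases i <;> simp [h.s_nonneg, h.t_nonneg] <;> linarith
    · intro i
      fin_cases i <;> simp [h.s_le, h.t_le] <;> linarith
  · rintro ⟨p, hp, rfl⟩
    exact ⟨_, _, _, _, _, _, _, hp⟩

/-- A motion keeping a needle chain a needle chain preserves entanglement. -/
theorem entangled_of_motion {γ : ℝ → ℕ → E3}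
    (hγ : ∀ i ≤ 5, ContinuousOn (fun τ => γ τ i) (Set.Icc 0 1))
    (hchain : ∀ τ ∈ Set.Icc (0 : ℝ) 1, IsNeedleChain (γ τ))
    (h₀ : ∃ x₁ x₂ x₃ x₄ d s t, IsEntangled (γ 0) x₁ x₂ x₃ x₄ d s t) :
    ∃ x₁ x₂ x₃ x₄ d s t, IsEntangled (γ 1) x₁ x₂ x₃ x₄ d s t := by
  have hc : ∀ i ≤ 5, Continuous fun τ : unitInterval => γ τ i :=
    fun i hi => continuousOn_iff_continuous_domRestrict.1 (hγ i hi)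
  have huniv := IsClopen.eq_univ
    ⟨isClosed_entangled hc, isOpen_entangled hc fun τ => hchain τ τ.2⟩ ⟨0, h₀⟩
  exact huniv.ge (Set.mem_univ (1 : unitInterval))

theorem IsStraightening.not_linearIndependent_middle {v w : ℕ → E3}
    (h : IsStraightening 5 v w) :
    ¬ LinearIndependent ℝ ![w 2 - w 1, w 3 - w 1, w 4 - w 1] := by
  obtain ⟨p, u, -, hw⟩ := h
  intro hli
  have key := Fintype.linearIndependent_iff.1 hli
  have hsmul : ∀ j ≤ 5, ∃ r : ℝ, w j - w 1 = r • u := fun j hj =>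
    ⟨_, by rw [hw j hj, hw 1 (by simp), add_sub_add_left_eq_sub, ← sub_smul]⟩
  obtain ⟨a, ha⟩ := hsmul 2 (by simp)
  obtain ⟨b, hb⟩ := hsmul 3 (by simp)
  have ha₀ : a = 0 := by
    have := key ![b, -a, 0] (by
      simp only [Fin.sum_univ_three, Matrix.cons_val, ha, hb]
      module) 1
    simpa using this
  have := key ![1, 0, 0] (by simp [Fin.sum_univ_three, ha, ha₀]) 0
  simp at this

theorem segment_inter_segment_eq_singleton {p q r : E3}
    (h : ∀ s t : ℝ, 0 ≤ s → 0 ≤ t → s • (p - q) = t • (r - q) → s = 0) :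
    segment ℝ p q ∩ segment ℝ q r = {q} := by
  refine Set.eq_singleton_iff_unique_mem.2
    ⟨⟨right_mem_segment ℝ p q, left_mem_segment ℝ q r⟩, ?_⟩
  rintro x ⟨⟨a, b, ha, -, hab, rfl⟩, ⟨c, d, -, hd, hcd, he⟩⟩
  obtain rfl : b = 1 - a := by linarith
  obtain rfl : c = 1 - d := by linarith
  have ha₀ := h a d ha hd (by linear_combination (norm := module) -he)
  simp [ha₀]

theorem segment_inter_segment_eq_empty {p q r z : E3}
    (h : ∀ s t : ℝ, p + s • (q - p) ≠ r + t • (z - r) ∨ s ∉ Set.Icc 0 1 ∨ t ∉ Set.Icc 0 1) :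
    segment ℝ p q ∩ segment ℝ r z = ∅ := by
  rw [segment_eq_image', segment_eq_image', Set.eq_empty_iff_forall_notMem]
  rintro x ⟨⟨s, hs, rfl⟩, ⟨t, ht, he⟩⟩
  have := h s t
  tauto

/-- The vertices of the locked chain. -/
def needleVertices : ℕ → E3
  | 0 => !₂[-5, 2, 1]
  | 1 => !₂[1, 0, 0]
  | 2 => !₂[0, 0, 1]
  | 3 => !₂[0, 0, 0]
  | 4 => !₂[0, 1, 0]
  | _ => !₂[2, -5, 3]

theorem isSimpleOpenChain_needleVertices : IsSimpleOpenChain 5 needleVertices := by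
  refine ⟨by simp, ?_, ?_⟩
  · intro i j hi hj hij
    interval_cases i <;> interval_cases j <;>
      simp_all [needleVertices, funext_iff, Fin.forall_fin_succ]
  · intro i j hij hj
    interval_cases j <;> interval_cases i <;>
      simp only [Nat.reduceAdd, zero_add, Nat.reduceEqDiff, if_true, if_false, needleVertices]
    all_goals first
      | refine segment_inter_segment_eq_singleton fun s t hs ht h => ?_
        have h0 := congrArg (fun x : E3 => x 0) h
        have h1 := congrArg (fun x : E3 => x 1) h
        have h2 := congrArg (fun x : E3 => x 2) h
        simp at h0 h1 h2
        linarith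
      | refine segment_inter_segment_eq_empty fun s t => ?_
        by_contra! hst
        obtain ⟨h, ⟨hs, hs'⟩, ⟨ht, ht'⟩⟩ := hst
        have h0 := congrArg (fun x : E3 => x 0) h
        have h1 := congrArg (fun x : E3 => x 1) h
        have h2 := congrArg (fun x : E3 => x 2) h
        simp at h0 h1 h2
        linarith

theorem isEntangled_needleVertices :
    IsEntangled needleVertices (1 / 4) (1 / 8) (3 / 8) (1 / 4) (1 / 4) (1 / 8) (1 / 8) := by
  constructor <;> try norm_num
  all_goals
    ext i
    fin_cases i <;> simp [needleVertices] <;> norm_num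

theorem IsSimpleOpenChain.isNeedleChain {v : ℕ → E3} (h : IsSimpleOpenChain 5 v)
    (hl : ∀ i < 5, ‖v (i + 1) - v i‖ = ‖needleVertices (i + 1) - needleVertices i‖) :
    IsNeedleChain v := by
  have l₀ := hl 0 (by simp)
  have l₁ := hl 1 (by simp)
  have l₂ := hl 2 (by simp)
  have l₃ := hl 3 (by simp)
  have l₄ := hl 4 (by simp)
  simp only [zero_add, Nat.reduceAdd] at l₀ l₁ l₂ l₃ l₄
  have hm : ‖v 2 - v 1‖ + ‖v 3 - v 2‖ + ‖v 4 - v 3‖ < 4 := by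
    rw [l₁, l₂, l₃]
    simp [needleVertices, EuclideanSpace.norm_eq, Fin.sum_univ_three]
    have : √(1 + 1 : ℝ) < 2 := (Real.sqrt_lt' two_pos).2 (by norm_num)
    linarith
  refine ⟨fun i j hij hj => ?_, hm.trans_le ?_, hm.trans_le ?_⟩
  · rw [Set.disjoint_iff_inter_eq_empty, h.2.2 i j (by omega) hj, if_neg (by omega)]
  · rw [l₀]
    simp [needleVertices, EuclideanSpace.norm_eq, Fin.sum_univ_three]
    exact Real.le_sqrt_of_sq_le (by norm_num)
  · rw [l₄]
    simp [needleVertices, EuclideanSpace.norm_eq, Fin.sum_univ_three]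
    exact Real.le_sqrt_of_sq_le (by norm_num)

/-- There exists a locked simple open polygonal chain in ℝ³ with
5 edges (6 vertices): a simple open chain that cannot be straightened by any motion. -/
theorem exists_locked_open_chain :
    ∃ v : ℕ → E3, IsSimpleOpenChain 5 v ∧ ¬ CanBeStraightened 5 v := by
  refine ⟨needleVertices, isSimpleOpenChain_needleVertices, ?_⟩
  rintro ⟨γ, ⟨hcont, hstart, hsimple, hlength⟩, hstraight⟩
  have hchain : ∀ τ ∈ Set.Icc (0 : ℝ) 1, IsNeedleChain (γ τ) :=
    fun τ hτ => (hsimple τ hτ).isNeedleChain (hlength τ hτ)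
  have h₀ : IsEntangled (γ 0) (1 / 4) (1 / 8) (3 / 8) (1 / 4) (1 / 4) (1 / 8) (1 / 8) :=
    { isEntangled_needleVertices with
      first_eq := by
        rw [hstart 0 (by simp), hstart 1 (by simp), hstart 2 (by simp), hstart 3 (by simp),
          hstart 4 (by simp)]
        exact isEntangled_needleVertices.first_eq
      last_eq := by
        rw [hstart 1 (by simp), hstart 2 (by simp), hstart 3 (by simp), hstart 4 (by simp),
          hstart 5 (by simp)]
        exact isEntangled_needleVertices.last_eq }
  obtain ⟨x₁, x₂, x₃, x₄, d, s, t, h⟩ :=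
    entangled_of_motion hcont hchain ⟨_, _, _, _, _, _, _, h₀⟩
  exact hstraight.not_linearIndependent_middle (h.linearIndependent_middle (hchain 1 (by simp)))
end
end

section
/- There exists a locked simple closed polygonal chain in ℝ³, i.e., a simple closed polygonal chain that cannot be convexified by any motion. -/
noncomputable section

/-- `v 0, …, v (n-1)` is a simple closed polygonal chain (polygon) in ℝ³: `n ≥ 3`,
the vertices are pairwise distinct, and two edges `[v i, v ((i+1) % n)]`,
`[v j, v ((j+1) % n)]` (for `i < j < n`) are disjoint unless they are cyclically
consecutive, in which case they meet exactly in their common vertex. -/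
def IsSimpleClosedChain (n : ℕ) (v : ℕ → E3) : Prop :=
  3 ≤ n ∧
  (∀ i j, i < n → j < n → i ≠ j → v i ≠ v j) ∧
  (∀ i j, i < j → j < n →
    segment ℝ (v i) (v ((i + 1) % n)) ∩ segment ℝ (v j) (v ((j + 1) % n)) =
      if i + 1 = j then {v j}
      else if i = 0 ∧ j = n - 1 then {v 0}
      else ∅)

/-- A motion of the closed chain `v 0, …, v (n-1)`: a continuous family of
configurations over `[0,1]`, starting at `v`, remaining a simple closed chain at
all times, and preserving all edge lengths. -/
def IsClosedChainMotion (n : ℕ) (v : ℕ → E3) (γ : ℝ → ℕ → E3) : Prop :=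
  (∀ i, i < n → ContinuousOn (fun t => γ t i) (Set.Icc 0 1)) ∧
  (∀ i, i < n → γ 0 i = v i) ∧
  (∀ t ∈ Set.Icc (0 : ℝ) 1, IsSimpleClosedChain n (γ t)) ∧
  (∀ t ∈ Set.Icc (0 : ℝ) 1, ∀ i, i < n →
    ‖γ t ((i + 1) % n) - γ t i‖ = ‖v ((i + 1) % n) - v i‖)

/-- The configuration `w 0, …, w (n-1)` is a planar convex polygon: all vertices lie
in a common plane (2-dimensional affine subspace), they are in strictly convex
position (no vertex is in the convex hull of the others), and the cyclic order of
the chain agrees with the order of the vertices along the boundary of their convex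
hull: each edge lies on a supporting line of the configuration, with all other
vertices strictly on one side. -/
def IsConvexConfiguration (n : ℕ) (w : ℕ → E3) : Prop :=
  (∃ S : AffineSubspace ℝ E3, Module.finrank ℝ S.direction = 2 ∧
    ∀ i, i < n → w i ∈ S) ∧
  (∀ i, i < n → w i ∉ convexHull ℝ {x | ∃ j, j < n ∧ j ≠ i ∧ x = w j}) ∧
  (∀ i, i < n → ∃ f : E3 →ₗ[ℝ] ℝ,
    f (w i) = f (w ((i + 1) % n)) ∧
    ∀ j, j < n → j ≠ i → j ≠ (i + 1) % n → f (w j) < f (w i))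

/-- The closed chain `v 0, …, v (n-1)` can be convexified: there is a motion whose
final configuration is a planar convex polygon. -/
def CanBeConvexified (n : ℕ) (v : ℕ → E3) : Prop :=
  ∃ γ : ℝ → ℕ → E3, IsClosedChainMotion n v γ ∧ IsConvexConfiguration n (γ 1)

open Matrix Filter Topology

/-- If the solutions of `M x *ᵥ u = b` in the standard simplex never touch its boundary, then
having such a solution is constant on a connected parameter space. -/
theorem exists_mem_stdSimplex_mulVec_eq {X ι : Type*} [TopologicalSpace X] [PreconnectedSpace X]
    [Fintype ι] [DecidableEq ι] {M : X → Matrix ι ι ℝ} (hM : Continuous M) {b : ι → ℝ} {j : ι}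
    (hMj : ∀ x, M x j = 1) (hbj : b j = 1)
    (hpos : ∀ x, ∀ u ∈ stdSimplex ℝ ι, M x *ᵥ u = b → ∀ i, 0 < u i)
    {x : X} (hx : ∃ u ∈ stdSimplex ℝ ι, M x *ᵥ u = b) (y : X) :
    ∃ u ∈ stdSimplex ℝ ι, M y *ᵥ u = b := by
  have hsum : ∀ x u, ∑ i, u i = (M x *ᵥ u) j := fun x u => by
    simp [Matrix.mulVec, dotProduct, hMj x]
  have hclosed : IsClosed {x | ∃ u ∈ stdSimplex ℝ ι, M x *ᵥ u = b} := by
    have hC : IsClosed {p : X × stdSimplex ℝ ι | M p.1 *ᵥ (p.2 : ι → ℝ) = b} :=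
      isClosed_eq ((hM.comp continuous_fst).matrix_mulVec
        (continuous_subtype_val.comp continuous_snd)) continuous_const
    convert isClosedMap_fst_of_compactSpace _ hC using 1
    ext x
    exact ⟨fun ⟨u, hu, h⟩ => ⟨(x, ⟨u, hu⟩), h, rfl⟩,
      by rintro ⟨⟨_, u, hu⟩, h, rfl⟩; exact ⟨u, hu, h⟩⟩
  have hopen : IsOpen {x | ∃ u ∈ stdSimplex ℝ ι, M x *ᵥ u = b} := by
    rw [isOpen_iff_mem_nhds]
    rintro x ⟨w, hw, hwb⟩
    have hw0 := hpos x w hw hwb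
    have hdet : (M x).det ≠ 0 := by
      intro h0
      obtain ⟨u, hu, hMu⟩ := Matrix.exists_mulVec_eq_zero_iff.2 h0
      have hu0 : ∑ i, u i = 0 := by rw [hsum x, hMu]; rfl
      obtain ⟨i₀, hi₀⟩ : ∃ i, u i < 0 := by
        by_contra! h
        exact hu (funext fun i =>
          (Finset.sum_eq_zero_iff_of_nonneg fun i _ => h i).1 hu0 i (Finset.mem_univ i))
      obtain ⟨k, hk, hmin⟩ := (Finset.univ.filter fun i => u i < 0).exists_min_image
        (fun i => w i / -u i) ⟨i₀, by simpa using hi₀⟩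
      simp only [Finset.mem_filter, Finset.mem_univ, true_and] at hk hmin
      have hτ : 0 < w k / -u k := div_pos (hw0 k) (by linarith)
      have hmem : w + (w k / -u k) • u ∈ stdSimplex ℝ ι := by
        refine ⟨fun i => ?_, ?_⟩
        · simp only [Pi.add_apply, Pi.smul_apply, smul_eq_mul]
          rcases lt_or_ge (u i) 0 with hi | hi
          · have := hmin i hi
            rw [le_div_iff₀ (by linarith)] at this
            linarith
          · have := hw0 i
            positivity
        · simp [Finset.sum_add_distrib, ← Finset.mul_sum, hu0, hw.2]
      have := hpos x _ hmem (by rw [Matrix.mulVec_add, Matrix.mulVec_smul, hMu, hwb]; simp) k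
      simp only [Pi.add_apply, Pi.smul_apply, smul_eq_mul] at this
      have h2 : w k / -u k * u k = -w k := by
        have := hk.ne
        field_simp
      linarith
    have hcr : Matrix.cramer (M x) b = (M x).det • w := by
      rw [← hwb, Matrix.cramer_eq_adjugate_mulVec, Matrix.mulVec_mulVec, Matrix.adjugate_mul,
        Matrix.smul_mulVec, Matrix.one_mulVec]
    have hcont : Continuous fun y => (M y).det • Matrix.cramer (M y) b :=
      hM.matrix_det.smul (hM.matrix_cramer continuous_const)
    have hev : ∀ i, ∀ᶠ y in 𝓝 x, 0 < ((M y).det • Matrix.cramer (M y) b) i := fun i =>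
      ((continuous_apply i).comp hcont).continuousAt.eventually_const_lt (by
        simp only [Function.comp, hcr, Pi.smul_apply, smul_eq_mul]
        have := hw0 i
        rw [← mul_assoc]
        exact mul_pos (mul_self_pos.2 hdet) this)
    filter_upwards [eventually_all.2 hev, hM.matrix_det.continuousAt.eventually_ne hdet]
      with y hy hdy
    have hsol : M y *ᵥ ((M y).det⁻¹ • Matrix.cramer (M y) b) = b := by
      rw [Matrix.mulVec_smul, Matrix.mulVec_cramer, smul_smul, inv_mul_cancel₀ hdy, one_smul]
    refine ⟨_, ⟨fun i => ?_, by rw [hsum y, hsol, hbj]⟩, hsol⟩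
    have h1 := hy i
    simp only [Pi.smul_apply, smul_eq_mul] at h1 ⊢
    have h2 : 0 < (M y).det ^ 2 := by positivity
    have h3 : (M y).det⁻¹ * Matrix.cramer (M y) b i =
        (M y).det * Matrix.cramer (M y) b i / (M y).det ^ 2 := by field_simp
    rw [h3]
    positivity
  have := IsClopen.eq_univ ⟨hclosed, hopen⟩ ⟨x, hx⟩
  exact this.ge (Set.mem_univ y)

/-- The cones spanned by `{a, b}` and by `{c, d}` meet only trivially. -/
def ConesSeparated {V : Type*} [AddCommGroup V] [Module ℝ V] (a b c d : V) : Prop :=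
  ∀ p q r s : ℝ, 0 ≤ p → 0 ≤ q → 0 ≤ r → 0 ≤ s → p • a + q • b = r • c + s • d →
    p = 0 ∧ q = 0 ∧ r = 0 ∧ s = 0

theorem ConesSeparated.symm {V : Type*} [AddCommGroup V] [Module ℝ V] {a b c d : V}
    (h : ConesSeparated a b c d) : ConesSeparated c d a b := by
  intro p q r s hp hq hr hs heq
  obtain ⟨h1, h2, h3, h4⟩ := h r s p q hr hs hp hq heq.symm
  exact ⟨h3, h4, h1, h2⟩

section Interlaced

variable {V : Type*} [AddCommGroup V] [Module ℝ V]

/-- The three triangles `x₀x₁x₂`, `x₂x₃x₄`, `x₄x₅x₀` of a hexagon are met by the edges `x₃x₄`,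
`x₅x₀`, `x₁x₂` respectively, in a balanced way: the three relations add up to zero. -/
structure InterlacedRelations (x₀ x₁ x₂ x₃ x₄ x₅ : V)
    (a₀ a₂ b₂ b₄ c₄ c₀ s₁ s₃ s₅ : ℝ) : Prop where
  rel₀ : a₀ • x₀ + s₁ • x₁ + a₂ • x₂ = s₃ • x₃ + (b₄ + c₄) • x₄
  rel₂ : b₂ • x₂ + s₃ • x₃ + b₄ • x₄ = s₅ • x₅ + (c₀ + a₀) • x₀
  rel₄ : c₄ • x₄ + s₅ • x₅ + c₀ • x₀ = s₁ • x₁ + (a₂ + b₂) • x₂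

theorem InterlacedRelations.rotate {x₀ x₁ x₂ x₃ x₄ x₅ : V} {a₀ a₂ b₂ b₄ c₄ c₀ s₁ s₃ s₅ : ℝ}
    (h : InterlacedRelations x₀ x₁ x₂ x₃ x₄ x₅ a₀ a₂ b₂ b₄ c₄ c₀ s₁ s₃ s₅) :
    InterlacedRelations x₂ x₃ x₄ x₅ x₀ x₁ b₂ b₄ c₄ c₀ a₀ a₂ s₃ s₅ s₁ :=
  ⟨h.rel₂, h.rel₄, h.rel₀⟩

theorem InterlacedRelations.eq_zero {x₀ x₁ x₂ x₃ x₄ x₅ : V} {a₀ a₂ b₂ b₄ c₄ c₀ s₁ s₃ s₅ : ℝ}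
    (h : InterlacedRelations x₀ x₁ x₂ x₃ x₄ x₅ a₀ a₂ b₂ b₄ c₄ c₀ s₁ s₃ s₅)
    (h₁₃ : ConesSeparated x₁ x₂ x₃ x₄) (h₂₅ : ConesSeparated x₂ x₃ x₅ x₀)
    (h₃₅ : ConesSeparated x₃ x₄ x₅ x₀)
    (ha₀ : 0 ≤ a₀) (ha₂ : 0 ≤ a₂) (hb₂ : 0 ≤ b₂) (hb₄ : 0 ≤ b₄) (hc₄ : 0 ≤ c₄) (hc₀ : 0 ≤ c₀)
    (hs₃ : 0 ≤ s₃) (hs₅ : 0 ≤ s₅) (hs₁ : s₁ = 0) :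
    a₀ = 0 ∧ a₂ = 0 ∧ b₂ = 0 ∧ b₄ = 0 ∧ c₄ = 0 ∧ c₀ = 0 ∧ s₃ = 0 ∧ s₅ = 0 := by
  obtain ⟨h0, -, h4⟩ := h
  subst hs₁
  rcases eq_or_ne (b₄ + c₄) 0 with hB | hB
  · obtain rfl : b₄ = 0 := by linarith
    obtain rfl : c₄ = 0 := by linarith
    obtain ⟨h1, -, h2, h3⟩ := h₂₅ (a₂ + b₂) 0 s₅ c₀ (by positivity) le_rfl hs₅ hc₀
      (by linear_combination (norm := module) -h4)
    obtain rfl : a₂ = 0 := by linarith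
    obtain ⟨-, h5, -, h6⟩ := h₂₅ 0 s₃ 0 a₀ le_rfl hs₃ le_rfl ha₀
      (by linear_combination (norm := module) -h0)
    exact ⟨h6, rfl, by linarith, rfl, rfl, h3, h5, h2⟩
  · have key : (b₄ * a₂ + (b₄ + c₄) * b₂) • x₂ + (c₄ * s₃) • x₃ =
        ((b₄ + c₄) * s₅) • x₅ + ((b₄ + c₄) * c₀ + c₄ * a₀) • x₀ := by
      linear_combination (norm := module) -(b₄ + c₄) • h4 - c₄ • h0
    obtain ⟨h1, -, h2, h3⟩ := h₂₅ _ _ _ _ (by positivity) (by positivity) (by positivity)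
      (by positivity) key
    have hs₅' : s₅ = 0 := (mul_eq_zero.1 h2).resolve_left hB
    have hc₀' : c₀ = 0 := by
      refine (mul_eq_zero.1 (?_ : (b₄ + c₄) * c₀ = 0)).resolve_left hB
      have : 0 ≤ (b₄ + c₄) * c₀ := by positivity
      have : 0 ≤ c₄ * a₀ := by positivity
      linarith
    have hb₂' : b₂ = 0 := by
      refine (mul_eq_zero.1 (?_ : (b₄ + c₄) * b₂ = 0)).resolve_left hB
      have : 0 ≤ (b₄ + c₄) * b₂ := by positivity
      have : 0 ≤ b₄ * a₂ := by positivity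
      linarith
    subst hs₅' hc₀' hb₂'
    obtain ⟨-, h5, -, h6⟩ := h₁₃ 0 a₂ 0 c₄ le_rfl ha₂ le_rfl hc₄
      (by linear_combination (norm := module) -h4)
    subst h5 h6
    obtain ⟨h7, h8, -, h9⟩ := h₃₅ s₃ b₄ 0 a₀ hs₃ hb₄ le_rfl ha₀
      (by linear_combination (norm := module) -h0)
    exact ⟨h9, rfl, rfl, h8, rfl, rfl, h7, rfl⟩

theorem InterlacedRelations.pos {x₀ x₁ x₂ x₃ x₄ x₅ : V} {a₀ a₂ b₂ b₄ c₄ c₀ s₁ s₃ s₅ : ℝ}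
    (h : InterlacedRelations x₀ x₁ x₂ x₃ x₄ x₅ a₀ a₂ b₂ b₄ c₄ c₀ s₁ s₃ s₅)
    (h₁₃ : ConesSeparated x₁ x₂ x₃ x₄) (h₂₅ : ConesSeparated x₂ x₃ x₅ x₀)
    (h₃₅ : ConesSeparated x₃ x₄ x₅ x₀) (h₀₃ : ConesSeparated x₀ x₁ x₃ x₄)
    (ha₀ : 0 ≤ a₀) (ha₂ : 0 ≤ a₂) (hb₂ : 0 ≤ b₂) (hb₄ : 0 ≤ b₄) (hc₄ : 0 ≤ c₄) (hc₀ : 0 ≤ c₀)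
    (hs₁ : 0 ≤ s₁) (hs₃ : 0 ≤ s₃) (hs₅ : 0 ≤ s₅)
    (hsum : a₀ + a₂ + b₂ + b₄ + c₄ + c₀ + s₁ + s₃ + s₅ ≠ 0) :
    0 < a₀ ∧ 0 < a₂ ∧ 0 < s₁ := by
  have hs : s₁ ≠ 0 := by
    intro hs
    obtain ⟨_, _, _, _, _, _, _, _⟩ := h.eq_zero h₁₃ h₂₅ h₃₅ ha₀ ha₂ hb₂ hb₄ hc₄ hc₀ hs₃ hs₅ hs
    exact hsum (by linarith)
  refine ⟨ha₀.lt_of_ne' ?_, ha₂.lt_of_ne' ?_, hs₁.lt_of_ne' hs⟩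
  · rintro rfl
    exact hs (h₁₃ s₁ a₂ s₃ (b₄ + c₄) hs₁ ha₂ hs₃ (by positivity)
      (by linear_combination (norm := module) h.rel₀)).1
  · rintro rfl
    exact hs (h₀₃ a₀ s₁ s₃ (b₄ + c₄) ha₀ hs₁ hs₃ (by positivity)
      (by linear_combination (norm := module) h.rel₀)).2.1

end Interlaced

/-- Homogeneous coordinates of a point of space. -/
def homogeneous (p : E3) : Fin 4 → ℝ := ![p 0, p 1, p 2, 1]

theorem continuous_homogeneous : Continuous homogeneous := by
  unfold homogeneous
  fun_prop

theorem smul_homogeneous_eq {x y z p q : E3} {a b c d e : ℝ}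
    (h : a • homogeneous x + b • homogeneous y + c • homogeneous z =
      d • homogeneous p + e • homogeneous q) :
    a • x + b • y + c • z = d • p + e • q ∧ a + b + c = d + e := by
  refine ⟨?_, by simpa [homogeneous] using congrFun h 3⟩
  ext k
  fin_cases k
  · simpa [homogeneous] using congrFun h 0
  · simpa [homogeneous] using congrFun h 1
  · simpa [homogeneous] using congrFun h 2

theorem conesSeparated_homogeneous {a b c d : E3}
    (h : Disjoint (segment ℝ a b) (segment ℝ c d)) :
    ConesSeparated (homogeneous a) (homogeneous b) (homogeneous c) (homogeneous d) := by
  intro p q r s hp hq hr hs heq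
  obtain ⟨hvec, h3⟩ := smul_homogeneous_eq (a := p) (b := q) (c := 0) (z := a) (by simpa using heq)
  simp only [zero_smul, add_zero] at hvec h3
  by_contra hne
  have hm : 0 < p + q := by
    by_contra! hm
    exact hne ⟨by linarith, by linarith, by linarith, by linarith⟩
  refine Set.disjoint_left.1 h (?_ : (p / (p + q)) • a + (q / (p + q)) • b ∈ _) ?_
  · exact ⟨_, _, by positivity, by positivity,
      by field_simp, rfl⟩
  refine ⟨r / (p + q), s / (p + q), by positivity, by positivity, ?_, ?_⟩
  · rw [← add_div, h3, div_self (by linarith)]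
  · have := congrArg ((p + q)⁻¹ • ·) hvec.symm
    simpa only [smul_add, smul_smul, inv_mul_eq_div] using this

/-- The coefficients of the interlacing relations of a hexagon, followed by the total weight. -/
def interlacingMatrix (v : ℕ → E3) : Matrix (Fin 9) (Fin 9) ℝ :=
  let row₀ : Fin 4 → Fin 9 → ℝ := fun k =>
    ![homogeneous (v 0) k, homogeneous (v 2) k, 0, -homogeneous (v 4) k, -homogeneous (v 4) k, 0,
      homogeneous (v 1) k, -homogeneous (v 3) k, 0]
  let row₂ : Fin 4 → Fin 9 → ℝ := fun k =>
    ![-homogeneous (v 0) k, 0, homogeneous (v 2) k, homogeneous (v 4) k, 0, -homogeneous (v 0) k,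
      0, homogeneous (v 3) k, -homogeneous (v 5) k]
  ![row₀ 0, row₀ 1, row₀ 2, row₀ 3, row₂ 0, row₂ 1, row₂ 2, row₂ 3, 1]

theorem interlacingMatrix_mulVec_eq_iff (v : ℕ → E3) (u : Fin 9 → ℝ) :
    interlacingMatrix v *ᵥ u = Pi.single 8 1 ↔ ∑ i, u i = 1 ∧
      InterlacedRelations (homogeneous (v 0)) (homogeneous (v 1)) (homogeneous (v 2))
        (homogeneous (v 3)) (homogeneous (v 4)) (homogeneous (v 5))
        (u 0) (u 1) (u 2) (u 3) (u 4) (u 5) (u 6) (u 7) (u 8) := by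
  unfold interlacingMatrix
  generalize homogeneous (v 0) = x₀, homogeneous (v 1) = x₁, homogeneous (v 2) = x₂,
    homogeneous (v 3) = x₃, homogeneous (v 4) = x₄, homogeneous (v 5) = x₅
  constructor
  · intro h
    have hi := fun i => congrFun h i
    simp [Fin.forall_fin_succ, Matrix.mulVec, dotProduct, Fin.sum_univ_succ] at hi
    obtain ⟨h0, h1, h2, h3, h4, h5, h6, h7, h8⟩ := hi
    refine ⟨by simpa [Fin.sum_univ_succ] using h8, ?_, ?_, ?_⟩ <;> ext k <;> fin_cases k <;>
      simp <;> linarith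
  · rintro ⟨hsum, hrel₀, hrel₂, -⟩
    have h₀ := fun k => congrFun hrel₀ k
    have h₂ := fun k => congrFun hrel₂ k
    simp only [Pi.add_apply, Pi.smul_apply, smul_eq_mul] at h₀ h₂
    ext i
    fin_cases i <;> simp [Matrix.mulVec, dotProduct, Fin.sum_univ_succ]
    · linarith [h₀ 0]
    · linarith [h₀ 1]
    · linarith [h₀ 2]
    · linarith [h₀ 3]
    · linarith [h₂ 0]
    · linarith [h₂ 1]
    · linarith [h₂ 2]
    · linarith [h₂ 3]
    · simpa [Fin.sum_univ_succ] using hsum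

theorem continuous_interlacingMatrix {X : Type*} [TopologicalSpace X] {γ : X → ℕ → E3}
    (hγ : ∀ i < 6, Continuous fun x => γ x i) :
    Continuous fun x => interlacingMatrix (γ x) := by
  have h : ∀ i < 6, ∀ k, Continuous fun x => homogeneous (γ x i) k := fun i hi k =>
    (continuous_apply k).comp (continuous_homogeneous.comp (hγ i hi))
  have h0 := h 0 (by norm_num)
  have h1 := h 1 (by norm_num)
  have h2 := h 2 (by norm_num)
  have h3 := h 3 (by norm_num)
  have h4 := h 4 (by norm_num)
  have h5 := h 5 (by norm_num)
  unfold interlacingMatrix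
  refine continuous_pi fun i => continuous_pi fun j => ?_
  fin_cases i <;> fin_cases j <;> simp <;> fun_prop

theorem IsSimpleClosedChain.disjoint_segment {v : ℕ → E3} (h : IsSimpleClosedChain 6 v) {i j : ℕ}
    (hij : i + 1 < j) (hj : j < 6) (hne : ¬ (i = 0 ∧ j = 5)) :
    Disjoint (segment ℝ (v i) (v ((i + 1) % 6))) (segment ℝ (v j) (v ((j + 1) % 6))) := by
  have := h.2.2 i j (by omega) hj
  rw [if_neg (by omega), if_neg (by omega)] at this
  exact Set.disjoint_iff_inter_eq_empty.2 this

theorem IsSimpleClosedChain.interlacing_weights_pos {v : ℕ → E3} (h : IsSimpleClosedChain 6 v)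
    {u : Fin 9 → ℝ} (hu : u ∈ stdSimplex ℝ (Fin 9))
    (huv : interlacingMatrix v *ᵥ u = Pi.single 8 1) (i : Fin 9) : 0 < u i := by
  obtain ⟨hsum, hrel⟩ := (interlacingMatrix_mulVec_eq_iff v u).1 huv
  have sep := fun i j hij hj hne =>
    conesSeparated_homogeneous (h.disjoint_segment (i := i) (j := j) hij hj hne)
  have h03 := sep 0 3 (by norm_num) (by norm_num) (by norm_num)
  have h13 := sep 1 3 (by norm_num) (by norm_num) (by norm_num)
  have h14 := sep 1 4 (by norm_num) (by norm_num) (by norm_num)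
  have h15 := sep 1 5 (by norm_num) (by norm_num) (by norm_num)
  have h25 := sep 2 5 (by norm_num) (by norm_num) (by norm_num)
  have h35 := sep 3 5 (by norm_num) (by norm_num) (by norm_num)
  have nn := hu.1
  simp [Fin.sum_univ_succ] at hsum
  obtain ⟨_, _, _⟩ := hrel.pos h13 h25 h35 h03 (nn _) (nn _) (nn _) (nn _) (nn _) (nn _) (nn _)
    (nn _) (nn _) (by linarith)
  obtain ⟨_, _, _⟩ := hrel.rotate.pos h35 h14.symm h15.symm h25 (nn _) (nn _) (nn _) (nn _)
    (nn _) (nn _) (nn _) (nn _) (nn _) (by linarith)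
  obtain ⟨_, _, _⟩ := hrel.rotate.rotate.pos h15.symm h03 h13 h14.symm (nn _) (nn _)
    (nn _) (nn _) (nn _) (nn _) (nn _) (nn _) (nn _) (by linarith)
  fin_cases i <;> assumption

/-- A hexagonal trefoil knot. -/
def trefoil : ℕ → E3
  | 0 => !₂[1, 0, 0]
  | 1 => !₂[0, -1, 1]
  | 2 => !₂[0, 1, 0]
  | 3 => !₂[1, 0, -1]
  | 4 => !₂[0, 0, 1]
  | 5 => !₂[-1, 1, 0]
  | _ => 0

theorem isSimpleClosedChain_trefoil : IsSimpleClosedChain 6 trefoil := by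
  have hseg : ∀ {p q p' q' : E3} {S : Set E3}, (∀ a b c d : ℝ, 0 ≤ a → 0 ≤ b → 0 ≤ c → 0 ≤ d →
      a + b = 1 → c + d = 1 → (∀ k, a * p k + b * q k = c * p' k + d * q' k) →
      a • p + b • q ∈ S) → segment ℝ p q ∩ segment ℝ p' q' ⊆ S := by
    rintro p q p' q' S h _ ⟨⟨a, b, ha, hb, hab, rfl⟩, c, d, hc, hd, hcd, heq⟩
    refine h a b c d ha hb hc hd hab hcd fun k => ?_
    simpa using (congrArg (fun x : E3 => x k) heq).symm
  refine ⟨by norm_num, fun i j hi hj hij heq => ?_, fun i j hij hj => ?_⟩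
  · have h0 := congrArg (fun x : E3 => x 0) heq
    have h1 := congrArg (fun x : E3 => x 1) heq
    have h2 := congrArg (fun x : E3 => x 2) heq
    clear heq
    interval_cases i <;> interval_cases j <;> simp [trefoil] at hij h0 h1 h2
  · refine Set.Subset.antisymm (hseg fun a b c d ha hb hc hd hab hcd heq => ?_) ?_
    · have h0 := heq 0
      have h1 := heq 1
      have h2 := heq 2
      clear heq hseg
      interval_cases j <;> interval_cases i <;> simp [trefoil] at h0 h1 h2 ⊢ <;>
        try linarith
      · obtain rfl : a = 0 := by linarith
        obtain rfl : b = 1 := by linarith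
        simp
      · obtain rfl : a = 0 := by linarith
        obtain rfl : b = 1 := by linarith
        simp
      · obtain rfl : a = 0 := by linarith
        obtain rfl : b = 1 := by linarith
        simp
      · obtain rfl : a = 0 := by linarith
        obtain rfl : b = 1 := by linarith
        simp
      · obtain rfl : b = 0 := by linarith
        obtain rfl : a = 1 := by linarith
        simp
      · obtain rfl : a = 0 := by linarith
        obtain rfl : b = 1 := by linarith
        simp
    · interval_cases j <;> interval_cases i <;>
        simp [left_mem_segment, right_mem_segment]

theorem exists_interlacing_weights_trefoil :
    ∃ u ∈ stdSimplex ℝ (Fin 9), interlacingMatrix trefoil *ᵥ u = Pi.single 8 1 := by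
  refine ⟨fun _ => 1 / 9, ⟨fun _ => by norm_num, by norm_num⟩, ?_⟩
  rw [interlacingMatrix_mulVec_eq_iff]
  refine ⟨by norm_num, ?_, ?_, ?_⟩ <;> ext k <;> fin_cases k <;>
    simp [homogeneous, trefoil] <;> norm_num

/-- There exists a locked simple closed polygonal chain in ℝ³:
a simple closed chain that cannot be convexified by any motion. -/
theorem exists_locked_closed_chain :
    ∃ (n : ℕ) (v : ℕ → E3), IsSimpleClosedChain n v ∧ ¬ CanBeConvexified n v := by
  refine ⟨6, trefoil, isSimpleClosedChain_trefoil, ?_⟩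
  rintro ⟨γ, ⟨hcont, hγ0, hsimple, -⟩, -, -, hsupp⟩
  have hM : Continuous fun t : unitInterval => interlacingMatrix (γ t) :=
    continuous_interlacingMatrix fun i hi => continuousOn_iff_continuous_domRestrict.1 (hcont i hi)
  have hstart : interlacingMatrix (γ (0 : unitInterval)) = interlacingMatrix trefoil := by
    simp [interlacingMatrix, hγ0]
    rfl
  obtain ⟨u, hu, hurel⟩ := exists_mem_stdSimplex_mulVec_eq hM (b := Pi.single 8 1) (j := 8)
    (fun _ => rfl) (by simp) (fun t u hu h => (hsimple t t.2).interlacing_weights_pos hu h)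
    (x := 0) (by rw [hstart]; exact exists_interlacing_weights_trefoil) 1
  have hpos := (hsimple 1 (by simp)).interlacing_weights_pos hu hurel
  obtain ⟨-, hrel, -, -⟩ := (interlacingMatrix_mulVec_eq_iff _ _).1 hurel
  obtain ⟨hvec, hsum⟩ := smul_homogeneous_eq hrel
  obtain ⟨f, hf, hlt⟩ := hsupp 3 (by norm_num)
  replace hvec := congrArg f hvec
  simp only [map_add, map_smul, smul_eq_mul] at hvec
  norm_num at hf
  have h0 := mul_lt_mul_of_pos_left (hlt 0 (by norm_num) (by norm_num) (by norm_num)) (hpos 0)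
  have h1 := mul_lt_mul_of_pos_left (hlt 1 (by norm_num) (by norm_num) (by norm_num)) (hpos 6)
  have h2 := mul_lt_mul_of_pos_left (hlt 2 (by norm_num) (by norm_num) (by norm_num)) (hpos 1)
  rw [Set.Icc.coe_one, ← hf] at hvec
  have := congrArg (· * f (γ 1 3)) hsum
  linarith
end
end
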